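/- Let G be a finite group, V a finite dimensional kG-module, and S = T_k(V)/(R) a Koszul algebra with R ⊆ V⊗V closed under the action of G. A filtered quadratic algebra H is a PBW deformation of S⋊G preserving the action of G if and only if H ≅ H_{0,α,β} for some G-invariant k-linear parameter functions α: R → V⊗kG and β: R → kG satisfying, upon projection to S⋊G: (i) α⊗1 − 1⊗α = 0 on (V⊗R)∩(R⊗V); (ii) α∘((1⊗σ)∘(α⊗1) − 1⊗α) = 1⊗β − β⊗1 on (V⊗R)∩(R⊗V); (iii) β∘((1⊗σ)∘(α⊗1) − 1⊗α) = 0 on (V⊗R)∩(R⊗V); moreover condition (i) implies that the maps in (ii) and (iii) are defined on (V⊗R)∩(R⊗V). (G-invariance of α and β is with respect to the action (ᵍα)(r) = ᵍ(α(ᵍ⁻¹r)) where ᵍ(v⊗h) = ᵍv⊗ghg⁻¹ for v ∈ V, g,h ∈ G.) -/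

import Mathlib

open TensorProduct

noncomputable section

namespace DeformKoszul

variable (k G V : Type) [Field k] [Group G] [AddCommGroup V] [Module k V]

/-! ### Koszulity (Backelin's distributivity criterion) -/

/-- `Vpow n = V^{⊗(n+1)}`. -/
def Vpow : ℕ → ModuleCat k
  | 0 => ModuleCat.of k V
  | n+1 => ModuleCat.of k (V ⊗[k] (Vpow n))

variable (R : Submodule k (V ⊗[k] V))

/-- `Wsub m i` is the subspace `V^{⊗i} ⊗ R ⊗ V^{⊗(m-1-i)}` of `V^{⊗(m+1)}`
(junk value `⊥` for `i > m-1`). -/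
def Wsub : (m : ℕ) → ℕ → Submodule k (Vpow k V m)
  | 0, _ => ⊥
  | 1, 0 => R
  | 1, _+1 => ⊥
  | m+2, 0 =>
      Submodule.map (TensorProduct.assoc k V V (Vpow k V m)).toLinearMap
        (LinearMap.range (TensorProduct.map R.subtype (LinearMap.id (M := Vpow k V m))))
  | m+1, i+1 =>
      LinearMap.range (TensorProduct.map (LinearMap.id (M := V)) (Wsub m i).subtype)

/-- The quadratic algebra `S = T(V)/(R)` is **Koszul**.  We use Backelin's criterion:
`S` is Koszul iff for each `n` the subspaces `V^{⊗i} ⊗ R ⊗ V^{⊗j}` of `V^{⊗n}`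
generate a distributive lattice; for finite collections of subspaces of a vector space
distributivity is equivalent to the existence of a basis of `V^{⊗n}` from which each of
the subspaces can be spanned. -/
def IsKoszul : Prop :=
  ∀ m : ℕ, ∃ (ι : Type) (b : Module.Basis ι k (Vpow k V m)),
    ∀ i : ℕ, ∃ J : Set ι, Wsub k V R m i = Submodule.span k (⇑b '' J)

/-! ### The deformed algebra `H_{λ,α,β}` -/

/-- The free `k`-algebra on the vector space `kG ⊕ V`. -/
abbrev FreeAlg := TensorAlgebra k (MonoidAlgebra k G × V)

/-- The canonical embedding of the group algebra `kG` into the free algebra. -/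
def gIn : MonoidAlgebra k G →ₗ[k] FreeAlg k G V :=
  (TensorAlgebra.ι k).comp (LinearMap.inl k (MonoidAlgebra k G) V)

/-- The canonical embedding of `V` into the free algebra. -/
def vIn : V →ₗ[k] FreeAlg k G V :=
  (TensorAlgebra.ι k).comp (LinearMap.inr k (MonoidAlgebra k G) V)

/-- `V ⊗ V → FreeAlg`, `v ⊗ w ↦ v·w`. -/
def mulVV : V ⊗[k] V →ₗ[k] FreeAlg k G V :=
  (LinearMap.mul' k _).comp (TensorProduct.map (vIn k G V) (vIn k G V))

/-- `V ⊗ kG → FreeAlg`, `v ⊗ x ↦ v·x`. -/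
def embVG : V ⊗[k] MonoidAlgebra k G →ₗ[k] FreeAlg k G V :=
  (LinearMap.mul' k _).comp (TensorProduct.map (vIn k G V) (gIn k G V))

variable (ρ : Representation k G V)

/-- The defining relations of `H_{λ,α,β}` over the generating space `kG ⊕ V`:
`kG` is a subalgebra (with the same unit), the group-action relations
`g·v = (ᵍv)·g + λ(g ⊗ v)` deforming `R'` by `λ`, and the quadratic Koszul relations
`r = α(r) + β(r)` for `r ∈ R`. -/
inductive GRel (lam : MonoidAlgebra k G ⊗[k] V →ₗ[k] MonoidAlgebra k G)
    (α : R →ₗ[k] (V ⊗[k] MonoidAlgebra k G))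
    (β : R →ₗ[k] MonoidAlgebra k G) :
    FreeAlg k G V → FreeAlg k G V → Prop
  | unit : GRel lam α β (gIn k G V 1) 1
  | gmul (x y : MonoidAlgebra k G) :
      GRel lam α β (gIn k G V x * gIn k G V y) (gIn k G V (x * y))
  | act (g : G) (v : V) :
      GRel lam α β (gIn k G V (MonoidAlgebra.of k G g) * vIn k G V v)
        (vIn k G V (ρ g v) * gIn k G V (MonoidAlgebra.of k G g)
          + gIn k G V (lam (MonoidAlgebra.of k G g ⊗ₜ[k] v)))
  | quad (r : R) :
      GRel lam α β (mulVV k G V (r : V ⊗[k] V))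
        (embVG k G V (α r) + gIn k G V (β r))

variable (lam : MonoidAlgebra k G ⊗[k] V →ₗ[k] MonoidAlgebra k G)
    (α : R →ₗ[k] (V ⊗[k] MonoidAlgebra k G))
    (β : R →ₗ[k] MonoidAlgebra k G)

/-- The algebra `H_{λ,α,β}`.  For `lam = 0`, `α = 0`, `β = 0` this is (the presentation
of) the skew group algebra `S ⋊ G`, where `S = T(V)/(R)`. -/
abbrev HAlg := RingQuot (GRel k G V R ρ lam α β)

/-- The quotient map onto `H_{λ,α,β}`. -/
def toH : FreeAlg k G V →ₐ[k] HAlg k G V R ρ lam α β :=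
  RingQuot.mkAlgHom k (GRel k G V R ρ lam α β)

/-- Degree-`n` part of the free algebra: `kG` has degree 0 and `V` degree 1. -/
def grT : ℕ → Submodule k (FreeAlg k G V)
  | 0 => Subalgebra.toSubmodule (Algebra.adjoin k (Set.range (gIn k G V)))
  | n+1 => grT n * (LinearMap.range (vIn k G V) * grT 0)

/-- Filtration of the free algebra, `kG` in degree 0 and `V` in degree 1. -/
def filtT : ℕ → Submodule k (FreeAlg k G V)
  | 0 => grT k G V 0
  | n+1 => filtT n ⊔ grT k G V (n+1)

/-- The induced filtration on `H_{λ,α,β}`. -/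
def filtH (d : ℕ) : Submodule k (HAlg k G V R ρ lam α β) :=
  (filtT k G V d).map (toH k G V R ρ lam α β).toLinearMap

/-- `H_{λ,α,β}` is a **PBW deformation** of `S ⋊ G`:  the associated graded algebra is
`S ⋊ G`, equivalently (all filtered pieces being finite dimensional) each filtered
piece has the same dimension as the corresponding one of `S ⋊ G = H_{0,0,0}`. -/
def IsPBW : Prop :=
  ∀ d, Module.finrank k (filtH k G V R ρ lam α β d)
    = Module.finrank k (filtH k G V R ρ 0 0 0 d)

/-! ### The skew group algebra and auxiliary maps -/

/-- The skew group algebra `S ⋊ G`, presented as `H_{0,0,0}`. -/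
abbrev SkewA := HAlg k G V R ρ 0 0 0

/-- The image of `kG` in `S ⋊ G`. -/
def gA : MonoidAlgebra k G →ₗ[k] SkewA k G V R ρ :=
  (toH k G V R ρ 0 0 0).toLinearMap.comp (gIn k G V)

/-- The image of `V` in `S ⋊ G`. -/
def vA : V →ₗ[k] SkewA k G V R ρ :=
  (toH k G V R ρ 0 0 0).toLinearMap.comp (vIn k G V)

/-- `g`, as an element of the group algebra. -/
def ofg (g : G) : MonoidAlgebra k G := MonoidAlgebra.of k G g

/-- The twist map `σ : kG ⊗ V → V ⊗ kG`, `g ⊗ v ↦ ᵍv ⊗ g`. -/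
def sigma : MonoidAlgebra k G ⊗[k] V →ₗ[k] V ⊗[k] MonoidAlgebra k G :=
  TensorProduct.lift
    (((Finsupp.lift (V →ₗ[k] (V ⊗[k] MonoidAlgebra k G)) k G
      (fun g => ((TensorProduct.mk k V (MonoidAlgebra k G)).flip (MonoidAlgebra.of k G g)).comp
        (ρ g))).comp (MonoidAlgebra.coeffLinearEquiv k).toLinearMap :
      MonoidAlgebra k G →ₗ[k] (V →ₗ[k] (V ⊗[k] MonoidAlgebra k G))))

/-- `λ(g ⊗ -) : V → kG` for fixed `g`. -/
def lamMk (g : G) : V →ₗ[k] MonoidAlgebra k G :=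
  lam.comp ((TensorProduct.mk k (MonoidAlgebra k G) V) (MonoidAlgebra.of k G g))

variable (hR : ∀ (g : G) (x : V ⊗[k] V), x ∈ R → TensorProduct.map (ρ g) (ρ g) x ∈ R)

/-- The diagonal action of `g` on `R ⊆ V ⊗ V`. -/
def rActR (g : G) : R →ₗ[k] R :=
  (TensorProduct.map (ρ g) (ρ g)).restrict (fun x hx => hR g x hx)

/-- Multiplication `V ⊗ kG → S ⋊ G`. -/
def embVGA : V ⊗[k] MonoidAlgebra k G →ₗ[k] SkewA k G V R ρ :=
  (LinearMap.mul' k _).comp (TensorProduct.map (vA k G V R ρ) (gA k G V R ρ))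

/-- Multiplication `kG ⊗ V → S ⋊ G`. -/
def embGVA : MonoidAlgebra k G ⊗[k] V →ₗ[k] SkewA k G V R ρ :=
  (LinearMap.mul' k _).comp (TensorProduct.map (gA k G V R ρ) (vA k G V R ρ))

/-- Multiplication `(V ⊗ kG) ⊗ V → S ⋊ G`. -/
def embVGVA : (V ⊗[k] MonoidAlgebra k G) ⊗[k] V →ₗ[k] SkewA k G V R ρ :=
  (LinearMap.mul' k _).comp (TensorProduct.map (embVGA k G V R ρ) (vA k G V R ρ))

/-- Multiplication `V ⊗ (V ⊗ kG) → S ⋊ G`. -/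
def embVVGA : V ⊗[k] (V ⊗[k] MonoidAlgebra k G) →ₗ[k] SkewA k G V R ρ :=
  (LinearMap.mul' k _).comp (TensorProduct.map (vA k G V R ρ) (embVGA k G V R ρ))

/-- The inclusion `R ⊗ V → V ⊗ (V ⊗ V)`. -/
def inclRV : (R : Submodule k (V ⊗[k] V)) ⊗[k] V →ₗ[k] V ⊗[k] (V ⊗[k] V) :=
  (TensorProduct.assoc k V V V).toLinearMap.comp
    (TensorProduct.map R.subtype LinearMap.id)

/-- The inclusion `V ⊗ R → V ⊗ (V ⊗ V)`. -/
def inclVR : V ⊗[k] (R : Submodule k (V ⊗[k] V)) →ₗ[k] V ⊗[k] (V ⊗[k] V) :=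
  TensorProduct.map LinearMap.id R.subtype

/-- The inclusion `R ⊗ kG → V ⊗ (V ⊗ kG)`. -/
def inclRG : (R : Submodule k (V ⊗[k] V)) ⊗[k] MonoidAlgebra k G →ₗ[k]
    V ⊗[k] (V ⊗[k] MonoidAlgebra k G) :=
  (TensorProduct.assoc k V V (MonoidAlgebra k G)).toLinearMap.comp
    (TensorProduct.map R.subtype LinearMap.id)

/-- `((1 ⊗ σ)(α ⊗ 1) − 1 ⊗ α)(x)`, computed from the two presentations
`x₁ ∈ R ⊗ V` and `x₂ ∈ V ⊗ R` of an element `x ∈ (R ⊗ V) ∩ (V ⊗ R)`. -/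
def Theta (x₁ : (R : Submodule k (V ⊗[k] V)) ⊗[k] V)
    (x₂ : V ⊗[k] (R : Submodule k (V ⊗[k] V))) : V ⊗[k] (V ⊗[k] MonoidAlgebra k G) :=
  (TensorProduct.map LinearMap.id (sigma k G V ρ))
      ((TensorProduct.assoc k V (MonoidAlgebra k G) V)
        ((TensorProduct.map α LinearMap.id) x₁))
    - (TensorProduct.map LinearMap.id α) x₂

/-- The extension of `α` to a right `kG`-module map `R ⊗ kG → V ⊗ kG`. -/
def αext : (R : Submodule k (V ⊗[k] V)) ⊗[k] MonoidAlgebra k G →ₗ[k]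
    V ⊗[k] MonoidAlgebra k G :=
  (TensorProduct.map LinearMap.id (LinearMap.mul' k (MonoidAlgebra k G))).comp
    (((TensorProduct.assoc k V (MonoidAlgebra k G) (MonoidAlgebra k G)).toLinearMap).comp
      (TensorProduct.map α LinearMap.id))

/-- The extension of `β` to a right `kG`-module map `R ⊗ kG → kG`. -/
def βext : (R : Submodule k (V ⊗[k] V)) ⊗[k] MonoidAlgebra k G →ₗ[k] MonoidAlgebra k G :=
  (LinearMap.mul' k (MonoidAlgebra k G)).comp (TensorProduct.map β LinearMap.id)

/-- The `g`-component `α_g : R → V` of `α`. -/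
def αComp (g : G) : (R : Submodule k (V ⊗[k] V)) →ₗ[k] V :=
  ((TensorProduct.rid k V).toLinearMap.comp
    (TensorProduct.map LinearMap.id ((Finsupp.lapply g).comp
      (MonoidAlgebra.coeffLinearEquiv k).toLinearMap))).comp α

/-- `Σ_{g ∈ G} α_g ⊗ λ(g ⊗ −)`, as a map `R ⊗ V → S ⋊ G`. -/
def sumAlphaLam [Fintype G] : (R : Submodule k (V ⊗[k] V)) ⊗[k] V →ₗ[k] SkewA k G V R ρ :=
  ∑ g : G, (embVGA k G V R ρ).comp
    (TensorProduct.map (αComp k G V R α g) (lamMk k G V lam g))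

/-- conjugation `x ↦ g·x·g⁻¹` on the group algebra. -/
def conjKG (g : G) : MonoidAlgebra k G →ₗ[k] MonoidAlgebra k G :=
  (LinearMap.mulRight k (MonoidAlgebra.of k G g⁻¹)).comp
    (LinearMap.mulLeft k (MonoidAlgebra.of k G g))

/-- the `G`-action `ᵍ(w ⊗ h) = ᵍw ⊗ ghg⁻¹` on `V ⊗ kG`. -/
def conjVG (g : G) : V ⊗[k] MonoidAlgebra k G →ₗ[k] V ⊗[k] MonoidAlgebra k G :=
  TensorProduct.map (ρ g) (conjKG k G g)

end DeformKoszul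

open DeformKoszul

namespace PBWaux

section generic

variable {k : Type} [Field k]

/-- pure tensors with left factor in `A` -/
lemma mem_tenL_span {X Y : Type} [AddCommGroup X] [Module k X] [AddCommGroup Y] [Module k Y]
    (A : Submodule k X) (B : Submodule k Y) :
    LinearMap.range (TensorProduct.map A.subtype B.subtype)
      = Submodule.span k {t | ∃ a ∈ A, ∃ b ∈ B, a ⊗ₜ[k] b = t} := by
  rw [TensorProduct.range_map_eq_span_tmul]
  congr 1
  ext t
  constructor
  · rintro ⟨a, b, rfl⟩
    exact ⟨a, a.2, b, b.2, rfl⟩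
  · rintro ⟨a, ha, b, hb, rfl⟩
    exact ⟨⟨a, ha⟩, ⟨b, hb⟩, rfl⟩

lemma range_map_id_left {X Y : Type} [AddCommGroup X] [Module k X] [AddCommGroup Y] [Module k Y]
    (B : Submodule k Y) :
    LinearMap.range (TensorProduct.map (LinearMap.id (R := k) (M := X)) B.subtype)
      = Submodule.span k {t | ∃ a : X, ∃ b ∈ B, a ⊗ₜ[k] b = t} := by
  rw [TensorProduct.range_map_eq_span_tmul]
  congr 1
  ext t
  constructor
  · rintro ⟨a, b, rfl⟩
    exact ⟨a, b, b.2, rfl⟩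
  · rintro ⟨a, b, hb, rfl⟩
    exact ⟨a, ⟨b, hb⟩, rfl⟩

lemma range_map_id_right {X Y : Type} [AddCommGroup X] [Module k X] [AddCommGroup Y] [Module k Y]
    (A : Submodule k X) :
    LinearMap.range (TensorProduct.map A.subtype (LinearMap.id (R := k) (M := Y)))
      = Submodule.span k {t | ∃ a ∈ A, ∃ b : Y, a ⊗ₜ[k] b = t} := by
  rw [TensorProduct.range_map_eq_span_tmul]
  congr 1
  ext t
  constructor
  · rintro ⟨a, b, rfl⟩
    exact ⟨a, a.2, b, rfl⟩
  · rintro ⟨a, ha, b, rfl⟩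
    exact ⟨⟨a, ha⟩, b, rfl⟩

/-- `(X ⊗ A) ∩ (X ⊗ B) = X ⊗ (A ∩ B)` -/
lemma inf_left {X Y : Type} [AddCommGroup X] [Module k X] [AddCommGroup Y] [Module k Y]
    (A B : Submodule k Y) (u : X ⊗[k] Y)
    (hA : u ∈ LinearMap.range (TensorProduct.map (LinearMap.id (R := k) (M := X)) A.subtype))
    (hB : u ∈ LinearMap.range (TensorProduct.map (LinearMap.id (R := k) (M := X)) B.subtype)) :
    u ∈ LinearMap.range (TensorProduct.map (LinearMap.id (R := k) (M := X)) (A ⊓ B).subtype) := by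
  classical
  let b := Module.Basis.ofVectorSpace k X
  have key : ∀ (C : Submodule k Y), u ∈ LinearMap.range
      (TensorProduct.map (LinearMap.id (R := k) (M := X)) C.subtype) →
      ∀ i, TensorProduct.equivFinsuppOfBasisLeft b u i ∈ C := by
    intro C hC i
    clear hA hB
    rw [range_map_id_left] at hC
    induction hC using Submodule.span_induction with
    | mem t ht =>
      obtain ⟨a, c, hc, rfl⟩ := ht
      rw [TensorProduct.equivFinsuppOfBasisLeft_apply_tmul_apply]
      exact C.smul_mem _ hc
    | zero => simp
    | add x y _ _ hx hy => rw [map_add]; exact C.add_mem hx hy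
    | smul r x _ hx => rw [map_smul]; exact C.smul_mem _ hx
  rw [range_map_id_left, ← (TensorProduct.equivFinsuppOfBasisLeft b).symm_apply_apply u,
    TensorProduct.equivFinsuppOfBasisLeft_symm_apply]
  refine Submodule.sum_mem _ fun i _ => Submodule.subset_span ⟨_, _, ⟨key A hA i, key B hB i⟩, rfl⟩

/-- `(A ⊗ Y) ∩ (B ⊗ Y) = (A ∩ B) ⊗ Y` -/
lemma inf_right {X Y : Type} [AddCommGroup X] [Module k X] [AddCommGroup Y] [Module k Y]
    (A B : Submodule k X) (u : X ⊗[k] Y)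
    (hA : u ∈ LinearMap.range (TensorProduct.map A.subtype (LinearMap.id (R := k) (M := Y))))
    (hB : u ∈ LinearMap.range (TensorProduct.map B.subtype (LinearMap.id (R := k) (M := Y)))) :
    u ∈ LinearMap.range (TensorProduct.map (A ⊓ B).subtype (LinearMap.id (R := k) (M := Y))) := by
  classical
  let b := Module.Basis.ofVectorSpace k Y
  have key : ∀ (C : Submodule k X), u ∈ LinearMap.range
      (TensorProduct.map C.subtype (LinearMap.id (R := k) (M := Y))) →
      ∀ i, TensorProduct.equivFinsuppOfBasisRight b u i ∈ C := by
    intro C hC i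
    clear hA hB
    rw [range_map_id_right] at hC
    induction hC using Submodule.span_induction with
    | mem t ht =>
      obtain ⟨a, ha, c, rfl⟩ := ht
      rw [TensorProduct.equivFinsuppOfBasisRight_apply_tmul_apply]
      exact C.smul_mem _ ha
    | zero => simp
    | add x y _ _ hx hy => rw [map_add]; exact C.add_mem hx hy
    | smul r x _ hx => rw [map_smul]; exact C.smul_mem _ hx
  rw [range_map_id_right, ← (TensorProduct.equivFinsuppOfBasisRight b).symm_apply_apply u,
    TensorProduct.equivFinsuppOfBasisRight_symm_apply]
  refine Submodule.sum_mem _ fun i _ => Submodule.subset_span ⟨_, ⟨key A hA i, key B hB i⟩, _, rfl⟩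

/-- `(A ⊗ Y) ∩ (X ⊗ B) = A ⊗ B` -/
lemma inf_both {X Y : Type} [AddCommGroup X] [Module k X] [AddCommGroup Y] [Module k Y]
    (A : Submodule k X) (B : Submodule k Y) (u : X ⊗[k] Y)
    (hA : u ∈ LinearMap.range (TensorProduct.map A.subtype (LinearMap.id (R := k) (M := Y))))
    (hB : u ∈ LinearMap.range (TensorProduct.map (LinearMap.id (R := k) (M := X)) B.subtype)) :
    u ∈ LinearMap.range (TensorProduct.map A.subtype B.subtype) := by
  obtain ⟨pA, hpA⟩ := A.subtype.exists_leftInverse_of_injective A.ker_subtype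
  obtain ⟨pB, hpB⟩ := B.subtype.exists_leftInverse_of_injective B.ker_subtype
  have e1 : TensorProduct.map (A.subtype ∘ₗ pA) (LinearMap.id (R := k) (M := Y)) u = u := by
    obtain ⟨w, rfl⟩ := hA
    rw [← LinearMap.comp_apply, ← TensorProduct.map_comp, LinearMap.comp_assoc, hpA]
    rfl
  have e2 : TensorProduct.map (LinearMap.id (R := k) (M := X)) (B.subtype ∘ₗ pB) u = u := by
    obtain ⟨w, rfl⟩ := hB
    rw [← LinearMap.comp_apply, ← TensorProduct.map_comp, LinearMap.comp_assoc, hpB]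
    rfl
  refine ⟨TensorProduct.map pA pB u, ?_⟩
  rw [← LinearMap.comp_apply, ← TensorProduct.map_comp]
  conv_rhs => rw [← e1, ← e2]
  rw [← LinearMap.comp_apply, ← TensorProduct.map_comp]
  rfl

/-- syzygies of a family of subspaces with an adapted basis -/
lemma syzygy {X F : Type} [AddCommGroup X] [Module k X] [AddCommGroup F] [Module k F]
    {ι : Type} (b : Module.Basis ι k X) (W : ℕ → Submodule k X)
    (hW : ∀ i, ∃ J : Set ι, W i = Submodule.span k (b '' J))
    (q : ℕ → X →ₗ[k] F) (N : Submodule k F)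
    (hpair : ∀ i j u, u ∈ W i → u ∈ W j → q i u - q j u ∈ N)
    (s : Finset ℕ) (u : ℕ → X) (hu : ∀ i, u i ∈ W i) (hsum : ∑ i ∈ s, u i = 0) :
    ∑ i ∈ s, q i (u i) ∈ N := by
  classical
  choose J hJ using hW
  have hsupp : ∀ i x, x ∉ J i → b.repr (u i) x = 0 := by
    intro i x hx
    have := hu i
    rw [hJ, Module.Basis.mem_span_image] at this
    by_contra h
    exact hx (this (by simpa using h))
  let T : Finset ι := s.biUnion fun i => (b.repr (u i)).support
  have hrep : ∀ i ∈ s, u i = ∑ x ∈ T, b.repr (u i) x • b x := by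
    intro i hi
    conv_lhs => rw [← b.linearCombination_repr (u i)]
    rw [Finsupp.linearCombination_apply, Finsupp.sum]
    apply Finset.sum_subset
    · exact Finset.subset_biUnion_of_mem (fun i => (b.repr (u i)).support) hi
    · intro x _ hx
      simp at hx
      simp [hx]
  have h1 : ∑ i ∈ s, q i (u i) = ∑ x ∈ T, ∑ i ∈ s, b.repr (u i) x • q i (b x) := by
    rw [Finset.sum_comm]
    refine Finset.sum_congr rfl fun i hi => ?_
    conv_lhs => rw [hrep i hi]
    simp
  rw [h1]
  refine Submodule.sum_mem _ fun x _ => ?_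
  have hz : ∑ i ∈ s, b.repr (u i) x = 0 := by
    have := congrArg (fun y => b.repr y x) hsum
    simpa using this
  by_cases hne : ∃ i₀, x ∈ J i₀
  · obtain ⟨i₀, hi₀⟩ := hne
    have : ∑ i ∈ s, b.repr (u i) x • q i (b x)
        = ∑ i ∈ s, b.repr (u i) x • (q i (b x) - q i₀ (b x)) := by
      simp only [smul_sub, Finset.sum_sub_distrib, ← Finset.sum_smul, hz, zero_smul, sub_zero]
    rw [this]
    refine Submodule.sum_mem _ fun i _ => ?_
    by_cases hx : x ∈ J i
    · refine N.smul_mem _ (hpair i i₀ _ ?_ ?_)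
      · rw [hJ]; exact Submodule.subset_span ⟨x, hx, rfl⟩
      · rw [hJ]; exact Submodule.subset_span ⟨x, hi₀, rfl⟩
    · rw [hsupp i x hx, zero_smul]; exact N.zero_mem
  · refine Submodule.sum_mem _ fun i _ => ?_
    rw [hsupp i x (fun h => hne ⟨i, h⟩), zero_smul]; exact N.zero_mem

end generic

end PBWaux


namespace PBWaux

section free

set_option linter.unusedSectionVars false

variable (k G V : Type) [Field k] [Group G] [AddCommGroup V] [Module k V]

/-- auxiliary bundled version of `V^{⊗n} ⊗ kG` -/
def MM : ℕ → ModuleCat k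
  | 0 => ModuleCat.of k (MonoidAlgebra k G)
  | n+1 => ModuleCat.of k (V ⊗[k] (MM n))

/-- `V^{⊗n} ⊗ kG` -/
def M (n : ℕ) : Type := MM k G V n

instance (n : ℕ) : AddCommGroup (M k G V n) := inferInstanceAs (AddCommGroup (MM k G V n))
instance (n : ℕ) : Module k (M k G V n) := inferInstanceAs (Module k (MM k G V n))

def e0 : MonoidAlgebra k G ≃ₗ[k] M k G V 0 := LinearEquiv.refl k _

def cons (n : ℕ) : V ⊗[k] M k G V n ≃ₗ[k] M k G V (n+1) :=
  LinearEquiv.refl k (V ⊗[k] M k G V n)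

instance finM [Fintype G] [FiniteDimensional k V] : ∀ n, FiniteDimensional k (M k G V n)
  | 0 => Module.Finite.equiv (e0 k G V)
  | n+1 => by
      have := finM n
      exact Module.Finite.equiv (cons k G V n)

/-- induction on `M (n+1)` -/
lemma M_ind {n : ℕ} {P : M k G V (n+1) → Prop} (h0 : P 0)
    (ht : ∀ v m, P (cons k G V n (v ⊗ₜ[k] m))) (ha : ∀ x y, P x → P y → P (x + y)) (x) : P x := by
  obtain ⟨t, rfl⟩ := (cons k G V n).surjective x
  induction t using TensorProduct.induction_on with
  | zero => rw [map_zero]; exact h0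
  | tmul v m => exact ht v m
  | add x y hx hy => rw [map_add]; exact ha _ _ hx hy

lemma M_ext {n : ℕ} {N : Type} [AddCommGroup N] [Module k N] {f g : M k G V (n+1) →ₗ[k] N}
    (h : ∀ v m, f (cons k G V n (v ⊗ₜ[k] m)) = g (cons k G V n (v ⊗ₜ[k] m))) : f = g := by
  ext x
  induction x using M_ind with
  | h0 => simp
  | ht v m => exact h v m
  | ha x y hx hy => rw [map_add, map_add, hx, hy]

variable (ρ : Representation k G V)

/-- the `G`-action on `M n` by left multiplication -/
def gM : (n : ℕ) → G → M k G V n →ₗ[k] M k G V n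
  | 0, g => (e0 k G V).toLinearMap ∘ₗ LinearMap.mulLeft k (MonoidAlgebra.of k G g) ∘ₗ
      (e0 k G V).symm.toLinearMap
  | n+1, g => (cons k G V n).toLinearMap ∘ₗ TensorProduct.map (ρ g) (gM n g) ∘ₗ
      (cons k G V n).symm.toLinearMap

@[simp] lemma gM_e0 (g : G) (x) : gM k G V ρ 0 g (e0 k G V x)
    = e0 k G V (MonoidAlgebra.of k G g * x) := by
  simp [gM]

@[simp] lemma gM_cons (n : ℕ) (g : G) (v m) : gM k G V ρ (n+1) g (cons k G V n (v ⊗ₜ[k] m))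
    = cons k G V n (ρ g v ⊗ₜ[k] gM k G V ρ n g m) := by
  simp [gM]

lemma gM_one (n : ℕ) : gM k G V ρ n 1 = 1 := by
  induction n with
  | zero =>
    ext x
    obtain ⟨x, rfl⟩ := (e0 k G V).surjective x
    rw [gM_e0, (MonoidAlgebra.of k G).map_one, one_mul]; rfl
  | succ n ih =>
    apply M_ext
    intro v m
    rw [gM_cons, ih]; simp

lemma gM_mul (n : ℕ) (g h : G) : gM k G V ρ n (g * h) = gM k G V ρ n g * gM k G V ρ n h := by
  induction n with
  | zero =>
    ext x
    obtain ⟨x, rfl⟩ := (e0 k G V).surjective x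
    rw [Module.End.mul_apply, gM_e0, gM_e0, gM_e0, (MonoidAlgebra.of k G).map_mul, mul_assoc]
  | succ n ih =>
    apply M_ext
    intro v m
    rw [Module.End.mul_apply, gM_cons, gM_cons, gM_cons, ih]; simp

/-- `T(V) ⋊ G` as a vector space -/
def F : Type := DirectSum ℕ (M k G V)

instance : AddCommGroup (F k G V) := inferInstanceAs (AddCommGroup (DirectSum ℕ (M k G V)))
instance : Module k (F k G V) := inferInstanceAs (Module k (DirectSum ℕ (M k G V)))

def io (n : ℕ) : M k G V n →ₗ[k] F k G V := DirectSum.lof k ℕ (M k G V) n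

def co (n : ℕ) : F k G V →ₗ[k] M k G V n := DirectSum.component k ℕ (M k G V) n

def fr {N : Type} [AddCommGroup N] [Module k N] (φ : ∀ n, M k G V n →ₗ[k] N) : F k G V →ₗ[k] N :=
  DirectSum.toModule k ℕ N φ

@[simp] lemma fr_io {N : Type} [AddCommGroup N] [Module k N] (φ : ∀ n, M k G V n →ₗ[k] N) (n m) :
    fr k G V φ (io k G V n m) = φ n m := DirectSum.toModule_lof k n m

@[simp] lemma co_io (n m) : co k G V n (io k G V n m) = m :=
  DirectSum.component.lof_self k n m

lemma co_io_ne {i n : ℕ} (h : n ≠ i) (m) : co k G V i (io k G V n m) = 0 := by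
  have := DirectSum.component.of k (M := M k G V) i n m
  rw [dif_neg h] at this
  exact this

lemma F_ext {N : Type} [AddCommGroup N] [Module k N] {f g : F k G V →ₗ[k] N}
    (h : ∀ n m, f (io k G V n m) = g (io k G V n m)) : f = g :=
  DirectSum.linearMap_ext k (fun n => LinearMap.ext (h n))

/-- elements of degree `≤ d` -/
def Fle (d : ℕ) : Submodule k (F k G V) := ⨅ n : ℕ, ⨅ _ : d < n, LinearMap.ker (co k G V n)

lemma mem_Fle (d : ℕ) (f) : f ∈ Fle k G V d ↔ ∀ n, d < n → co k G V n f = 0 := by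
  simp [Fle, Submodule.mem_iInf]

lemma io_mem_Fle {n d : ℕ} (h : n ≤ d) (m) : io k G V n m ∈ Fle k G V d := by
  rw [mem_Fle]
  intro i hi
  exact co_io_ne k G V (by omega) m

lemma Fle_mono {d e : ℕ} (h : d ≤ e) : Fle k G V d ≤ Fle k G V e := by
  intro f hf
  rw [mem_Fle] at *
  intro n hn
  exact hf n (by omega)

lemma Fle_eq (d : ℕ) : Fle k G V d = ⨆ n : Fin (d+1), LinearMap.range (io k G V n) := by
  classical
  apply le_antisymm
  · intro f hf
    rw [mem_Fle] at hf
    have : f = ∑ i ∈ DFinsupp.support (β := M k G V) f, io k G V i (co k G V i f) :=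
      (DirectSum.sum_support_of (β := M k G V) f).symm
    rw [this]
    refine Submodule.sum_mem _ fun i hi => ?_
    by_cases h : d < i
    · rw [hf i h, map_zero]; exact Submodule.zero_mem _
    · exact Submodule.mem_iSup_of_mem (⟨i, by omega⟩ : Fin (d+1)) ⟨_, rfl⟩
  · refine iSup_le fun n => ?_
    rintro _ ⟨m, rfl⟩
    exact io_mem_Fle k G V (by omega) m

lemma exists_Fle (f : F k G V) : ∃ d, f ∈ Fle k G V d := by
  classical
  have : f = ∑ i ∈ DFinsupp.support (β := M k G V) f, io k G V i (co k G V i f) :=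
      (DirectSum.sum_support_of (β := M k G V) f).symm
  refine ⟨(DFinsupp.support (β := M k G V) f).sup id, ?_⟩
  rw [this]
  refine Submodule.sum_mem _ fun i hi => io_mem_Fle k G V ?_ _
  rw [← this]
  exact Finset.le_sup (f := id) hi

lemma Fle_ind {d : ℕ} {P : F k G V → Prop} (h0 : P 0)
    (ht : ∀ n m, n ≤ d → P (io k G V n m)) (ha : ∀ x y, P x → P y → P (x + y)) (x)
    (hx : x ∈ Fle k G V d) : P x := by
  rw [Fle_eq] at hx
  induction hx using Submodule.iSup_induction' with
  | mem i x hx => obtain ⟨m, rfl⟩ := hx; exact ht _ _ (by omega)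
  | zero => exact h0
  | add x y _ _ hx hy => exact ha _ _ hx hy

instance [Fintype G] [FiniteDimensional k V] (d : ℕ) : FiniteDimensional k (Fle k G V d) := by
  rw [Fle_eq]; infer_instance

/-- left multiplication by vectors -/
def Lv : V →ₗ[k] Module.End k (F k G V) where
  toFun v := fr k G V fun n => io k G V (n+1) ∘ₗ (cons k G V n).toLinearMap ∘ₗ
    TensorProduct.mk k V (M k G V n) v
  map_add' v w := by
    apply F_ext
    intro n m
    simp
  map_smul' c v := by
    apply F_ext
    intro n m
    simp

@[simp] lemma Lv_io (v n m) : Lv k G V v (io k G V n m) = io k G V (n+1) (cons k G V n (v ⊗ₜ[k] m)) := by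
  simp [Lv]

/-- left multiplication by group elements -/
def gF : Representation k G (F k G V) where
  toFun g := fr k G V fun n => io k G V n ∘ₗ gM k G V ρ n g
  map_one' := by
    apply F_ext
    intro n m
    simp [gM_one]
  map_mul' g h := by
    apply F_ext
    intro n m
    simp [gM_mul]

@[simp] lemma gF_io (g n m) : gF k G V ρ g (io k G V n m) = io k G V n (gM k G V ρ n g m) := by
  simp [gF]

/-- left multiplication by the group algebra -/
def Lg : MonoidAlgebra k G →ₐ[k] Module.End k (F k G V) := (gF k G V ρ).asAlgebraHom

lemma Lg_of (g : G) : Lg k G V ρ (MonoidAlgebra.of k G g) = gF k G V ρ g := by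
  simp [Lg]

/-- induction on the group algebra -/
lemma kG_ind {P : MonoidAlgebra k G → Prop} (ho : ∀ g, P (MonoidAlgebra.of k G g))
    (ha : ∀ x y, P x → P y → P (x + y)) (hs : ∀ (c : k) x, P x → P (c • x)) (x) : P x :=
  MonoidAlgebra.induction_on x ho ha hs

lemma Lg_Lv (g : G) (v : V) : Lg k G V ρ (MonoidAlgebra.of k G g) * Lv k G V v
    = Lv k G V (ρ g v) * Lg k G V ρ (MonoidAlgebra.of k G g) := by
  rw [Lg_of]
  apply F_ext
  intro n m
  simp

lemma Lg_io0 (x y) : Lg k G V ρ x (io k G V 0 (e0 k G V y)) = io k G V 0 (e0 k G V (x * y)) := by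
  induction x using kG_ind with
  | ho g => rw [Lg_of, gF_io, gM_e0]
  | ha x y hx hy => simp [add_mul, hx, hy]
  | hs c x hx => simp [hx]

/-- `Lg` preserves each degree -/
lemma Lg_io (x n m) : ∃ m', Lg k G V ρ x (io k G V n m) = io k G V n m' := by
  induction x using kG_ind with
  | ho g => rw [Lg_of, gF_io]; exact ⟨_, rfl⟩
  | ha x y hx hy =>
    obtain ⟨a, ha⟩ := hx
    obtain ⟨b, hb⟩ := hy
    exact ⟨a + b, by simp [ha, hb]⟩
  | hs c x hx =>
    obtain ⟨a, ha⟩ := hx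
    exact ⟨c • a, by simp [ha]⟩

lemma Lg_Fle (x) (d : ℕ) (f) (hf : f ∈ Fle k G V d) : Lg k G V ρ x f ∈ Fle k G V d := by
  refine Fle_ind k G V (P := fun f => Lg k G V ρ x f ∈ Fle k G V d) ?_ ?_ ?_ f hf
  · simp
  · intro n m h
    obtain ⟨m', hm⟩ := Lg_io k G V ρ x n m
    rw [hm]; exact io_mem_Fle k G V h m'
  · intro x y hx hy
    rw [map_add]; exact Submodule.add_mem _ hx hy

lemma Lv_Fle (v) (d : ℕ) (f) (hf : f ∈ Fle k G V d) : Lv k G V v f ∈ Fle k G V (d+1) := by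
  refine Fle_ind k G V (P := fun f => Lv k G V v f ∈ Fle k G V (d+1)) ?_ ?_ ?_ f hf
  · simp
  · intro n m h
    rw [Lv_io]; exact io_mem_Fle k G V (by omega) _
  · intro x y hx hy
    rw [map_add]; exact Submodule.add_mem _ hx hy

end free

section eval

set_option linter.unusedSectionVars false

/-! generic evaluation in an algebra `E` with maps from `V` and `kG` -/

variable {k G V : Type} [Field k] [Group G] [AddCommGroup V] [Module k V]
variable {E : Type} [Ring E] [Algebra k E] (v : V →ₗ[k] E) (g : MonoidAlgebra k G →ₗ[k] E)

def eVG : V ⊗[k] MonoidAlgebra k G →ₗ[k] E := (LinearMap.mul' k E).comp (TensorProduct.map v g)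
def eVV : V ⊗[k] V →ₗ[k] E := (LinearMap.mul' k E).comp (TensorProduct.map v v)
def eGV : MonoidAlgebra k G ⊗[k] V →ₗ[k] E := (LinearMap.mul' k E).comp (TensorProduct.map g v)
def eVVG : V ⊗[k] (V ⊗[k] MonoidAlgebra k G) →ₗ[k] E :=
  (LinearMap.mul' k E).comp (TensorProduct.map v (eVG v g))
def eVGV : (V ⊗[k] MonoidAlgebra k G) ⊗[k] V →ₗ[k] E :=
  (LinearMap.mul' k E).comp (TensorProduct.map (eVG v g) v)

@[simp] lemma eVG_tmul (a b) : eVG v g (a ⊗ₜ[k] b) = v a * g b := rfl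
@[simp] lemma eVV_tmul (a b) : eVV v (a ⊗ₜ[k] b) = v a * v b := rfl
@[simp] lemma eGV_tmul (a b) : eGV v g (a ⊗ₜ[k] b) = g a * v b := rfl
@[simp] lemma eVVG_tmul (a b) : eVVG v g (a ⊗ₜ[k] b) = v a * eVG v g b := rfl
@[simp] lemma eVGV_tmul (a b) : eVGV v g (a ⊗ₜ[k] b) = eVG v g a * v b := rfl

variable (ρ : Representation k G V)

@[simp] lemma sigma_of (a : G) (w : V) : sigma k G V ρ (MonoidAlgebra.of k G a ⊗ₜ[k] w)
    = ρ a w ⊗ₜ[k] MonoidAlgebra.of k G a := by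
  simp [sigma]

lemma eVG_sigma
    (hact : ∀ (a : G) (w : V), g (MonoidAlgebra.of k G a) * v w = v (ρ a w) * g (MonoidAlgebra.of k G a))
    (t) : eVG v g (sigma k G V ρ t) = eGV v g t := by
  induction t using TensorProduct.induction_on with
  | zero => simp
  | add x y hx hy => simp [hx, hy]
  | tmul x w =>
    induction x using kG_ind with
    | ho a => rw [sigma_of, eVG_tmul, eGV_tmul, hact]
    | ha x y hx hy => simp only [TensorProduct.add_tmul, map_add, hx, hy]
    | hs c x hx => simp only [← TensorProduct.smul_tmul', map_smul, hx]

variable (R : Submodule k (V ⊗[k] V)) (α : R →ₗ[k] (V ⊗[k] MonoidAlgebra k G))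
    (β : R →ₗ[k] MonoidAlgebra k G)

lemma eVVG_Theta
    (hact : ∀ (a : G) (w : V), g (MonoidAlgebra.of k G a) * v w = v (ρ a w) * g (MonoidAlgebra.of k G a))
    (x₁ x₂) : eVVG v g (Theta k G V R ρ α x₁ x₂)
    = eVGV v g (TensorProduct.map α LinearMap.id x₁)
      - eVVG v g (TensorProduct.map LinearMap.id α x₂) := by
  rw [Theta, map_sub]
  congr 1
  generalize TensorProduct.map α LinearMap.id x₁ = t
  induction t using TensorProduct.induction_on with
  | zero => simp
  | add x y hx hy => simp only [map_add, hx, hy]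
  | tmul s w =>
    induction s using TensorProduct.induction_on with
    | zero => simp
    | add x y hx hy => simp only [TensorProduct.add_tmul, map_add, hx, hy]
    | tmul a x =>
      simp only [TensorProduct.assoc_tmul, TensorProduct.map_tmul, LinearMap.id_apply, eVVG_tmul,
        eVGV_tmul, eVG_tmul, eVG_sigma v g ρ hact, eGV_tmul, mul_assoc]

end eval

end PBWaux


namespace PBWaux

section core

set_option linter.unusedSectionVars false

variable (k G V : Type) [Field k] [Group G] [AddCommGroup V] [Module k V]
variable (ρ : Representation k G V) (R : Submodule k (V ⊗[k] V))
  (α : R →ₗ[k] (V ⊗[k] MonoidAlgebra k G)) (β : R →ₗ[k] MonoidAlgebra k G)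

/-- a linear extension to `V ⊗ V` of a map on `R` -/
def lext {k V : Type} [Field k] [AddCommGroup V] [Module k V] {R : Submodule k (V ⊗[k] V)}
    {N : Type} [AddCommGroup N] [Module k N] (f : R →ₗ[k] N) : V ⊗[k] V →ₗ[k] N :=
  (LinearMap.exists_extend f).choose

lemma lext_coe {k V : Type} [Field k] [AddCommGroup V] [Module k V] {R : Submodule k (V ⊗[k] V)}
    {N : Type} [AddCommGroup N] [Module k N] (f : R →ₗ[k] N) (r : R) : lext f r = f r :=
  LinearMap.congr_fun (LinearMap.exists_extend f).choose_spec r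

def cons2 (n : ℕ) : (V ⊗[k] V) ⊗[k] M k G V n ≃ₗ[k] M k G V (n+2) :=
  TensorProduct.assoc k V V (M k G V n) ≪≫ₗ
    TensorProduct.congr (LinearEquiv.refl k V) (cons k G V n) ≪≫ₗ cons k G V (n+1)

@[simp] lemma cons2_tmul (n : ℕ) (v w : V) (m) : cons2 k G V n ((v ⊗ₜ[k] w) ⊗ₜ[k] m)
    = cons k G V (n+1) (v ⊗ₜ[k] cons k G V n (w ⊗ₜ[k] m)) := by
  simp [cons2]

/-- the endomorphism `α(r) + β(r)` -/
def lo : V ⊗[k] V →ₗ[k] Module.End k (F k G V) :=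
  (eVG (Lv k G V) (Lg k G V ρ).toLinearMap) ∘ₗ lext α + (Lg k G V ρ).toLinearMap ∘ₗ lext β

lemma lo_coe (r : R) : lo k G V ρ R α β r
    = eVG (Lv k G V) (Lg k G V ρ).toLinearMap (α r) + Lg k G V ρ (β r) := by
  simp [lo, lext_coe]

/-- lower order part of the relations -/
def q : (n : ℕ) → ℕ → M k G V n →ₗ[k] F k G V
  | 0, _ => 0
  | 1, 0 => 0
  | n+2, 0 => TensorProduct.lift ((LinearMap.lcomp k (F k G V) (io k G V n)) ∘ₗ lo k G V ρ R α β) ∘ₗ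
      (cons2 k G V n).symm.toLinearMap
  | n+1, i+1 => TensorProduct.lift ((LinearMap.lcomp k (F k G V) (q n i)) ∘ₗ Lv k G V) ∘ₗ
      (cons k G V n).symm.toLinearMap

lemma q_two (n : ℕ) (t m) : q k G V ρ R α β (n+2) 0 (cons2 k G V n (t ⊗ₜ[k] m))
    = lo k G V ρ R α β t (io k G V n m) := by
  simp [q]

lemma q_succ (n i : ℕ) (v m) : q k G V ρ R α β (n+1) (i+1) (cons k G V n (v ⊗ₜ[k] m))
    = Lv k G V v (q k G V ρ R α β n i m) := by
  simp [q]

/-- `V^{⊗i} ⊗ R ⊗ V^{⊗(n-2-i)} ⊗ kG` -/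
def WM : (n : ℕ) → ℕ → Submodule k (M k G V n)
  | 0, _ => ⊥
  | 1, 0 => ⊥
  | n+2, 0 => (LinearMap.range (TensorProduct.map R.subtype
      (LinearMap.id (R := k) (M := M k G V n)))).map (cons2 k G V n).toLinearMap
  | n+1, i+1 => (LinearMap.range (TensorProduct.map
      (LinearMap.id (R := k) (M := V)) (WM n i).subtype)).map (cons k G V n).toLinearMap

lemma WM_two_ind (n : ℕ) {P : M k G V (n+2) → Prop} (h0 : P 0)
    (ht : ∀ (r : R) m, P (cons2 k G V n ((r : V ⊗[k] V) ⊗ₜ[k] m)))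
    (ha : ∀ x y, P x → P y → P (x + y)) (x) (hx : x ∈ WM k G V R (n+2) 0) : P x := by
  rw [WM] at hx
  obtain ⟨_, ⟨t, rfl⟩, rfl⟩ := hx
  induction t using TensorProduct.induction_on with
  | zero => simpa using h0
  | tmul r m => exact ht r m
  | add x y hx hy => simpa using ha _ _ hx hy

lemma WM_succ_ind (n i : ℕ) {P : M k G V (n+1) → Prop} (h0 : P 0)
    (ht : ∀ v m, m ∈ WM k G V R n i → P (cons k G V n (v ⊗ₜ[k] m)))
    (ha : ∀ x y, P x → P y → P (x + y)) (x) (hx : x ∈ WM k G V R (n+1) (i+1)) : P x := by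
  rw [WM] at hx
  obtain ⟨_, ⟨t, rfl⟩, rfl⟩ := hx
  induction t using TensorProduct.induction_on with
  | zero => simpa using h0
  | tmul r m => exact ht r m m.2
  | add x y hx hy => simpa using ha _ _ hx hy

lemma WM_two_mem (n : ℕ) (r : R) (m) :
    cons2 k G V n ((r : V ⊗[k] V) ⊗ₜ[k] m) ∈ WM k G V R (n+2) 0 := by
  rw [WM]
  exact ⟨_, ⟨r ⊗ₜ[k] m, rfl⟩, rfl⟩

lemma WM_succ_mem (n i : ℕ) (v m) (hm : m ∈ WM k G V R n i) :
    cons k G V n (v ⊗ₜ[k] m) ∈ WM k G V R (n+1) (i+1) := by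
  rw [WM]
  exact ⟨_, ⟨v ⊗ₜ[k] ⟨m, hm⟩, rfl⟩, rfl⟩

lemma WM_bot (n i : ℕ) (h : n < i + 2) : WM k G V R n i = ⊥ := by
  induction n generalizing i with
  | zero => rw [WM]
  | succ n ih =>
    cases i with
    | zero =>
      obtain rfl : n = 0 := by omega
      rw [WM]
    | succ i =>
      rw [eq_bot_iff]
      intro x hx
      refine WM_succ_ind k G V R n i (P := fun x => x ∈ (⊥ : Submodule k _)) ?_ ?_ ?_ x hx
      · simp
      · intro v m hm
        rw [ih i (by omega), Submodule.mem_bot] at hm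
        simp [hm]
      · intro x y hx hy; exact Submodule.add_mem _ hx hy

/-- span of the relations of degree at most `d` -/
def J (d : ℕ) : Submodule k (F k G V) :=
  Submodule.span k {f | ∃ n ≤ d, ∃ i, ∃ u ∈ WM k G V R n i,
    io k G V n u - q k G V ρ R α β n i u = f}

lemma J_mono {d e : ℕ} (h : d ≤ e) : J k G V ρ R α β d ≤ J k G V ρ R α β e := by
  apply Submodule.span_mono
  rintro f ⟨n, hn, h'⟩
  exact ⟨n, by omega, h'⟩

lemma J_mem {d n i : ℕ} (h : n ≤ d) (u) (hu : u ∈ WM k G V R n i) :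
    io k G V n u - q k G V ρ R α β n i u ∈ J k G V ρ R α β d :=
  Submodule.subset_span ⟨n, h, i, u, hu, rfl⟩

lemma J_ind {d : ℕ} {P : F k G V → Prop} (h0 : P 0)
    (ht : ∀ n i u, n ≤ d → u ∈ WM k G V R n i → P (io k G V n u - q k G V ρ R α β n i u))
    (ha : ∀ x y, P x → P y → P (x + y)) (x) (hx : x ∈ J k G V ρ R α β d) : P x := by
  let A : AddSubmonoid (F k G V) := AddSubmonoid.closure {f | ∃ n ≤ d, ∃ i, ∃ u ∈ WM k G V R n i,
    io k G V n u - q k G V ρ R α β n i u = f}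
  have hsm : ∀ (c : k) y, y ∈ A → c • y ∈ A := by
    intro c y hy
    induction hy using AddSubmonoid.closure_induction with
    | mem x hx =>
      obtain ⟨n, hn, i, u, hu, rfl⟩ := hx
      refine AddSubmonoid.subset_closure ⟨n, hn, i, c • u, Submodule.smul_mem _ _ hu, ?_⟩
      rw [map_smul, map_smul, smul_sub]
    | zero => rw [smul_zero]; exact A.zero_mem
    | add x y _ _ hx hy => rw [smul_add]; exact A.add_mem hx hy
  have hA : x ∈ A := by
    induction hx using Submodule.span_induction with
    | mem x hx => exact AddSubmonoid.subset_closure hx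
    | zero => exact A.zero_mem
    | add x y _ _ hx hy => exact A.add_mem hx hy
    | smul c x _ hx => exact hsm c x hx
  clear hx
  induction hA using AddSubmonoid.closure_induction with
  | mem x hx =>
    obtain ⟨n, hn, i, u, hu, rfl⟩ := hx
    exact ht n i u hn hu
  | zero => exact h0
  | add x y _ _ hx hy => exact ha _ _ hx hy

lemma Lv_J {d : ℕ} (v : V) (f) (hf : f ∈ J k G V ρ R α β d) :
    Lv k G V v f ∈ J k G V ρ R α β (d+1) := by
  refine J_ind k G V ρ R α β (P := fun f => Lv k G V v f ∈ J k G V ρ R α β (d+1)) ?_ ?_ ?_ f hf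
  · simp
  · intro n i u hn hu
    rw [map_sub, Lv_io, ← q_succ]
    exact J_mem k G V ρ R α β (by omega) _ (WM_succ_mem k G V R n i v u hu)
  · intro x y hx hy; rw [map_add]; exact Submodule.add_mem _ hx hy

/-- `eVG t` raises the filtration by one -/
lemma eVG_Fle (t) (d : ℕ) (f) (hf : f ∈ Fle k G V d) :
    eVG (Lv k G V) (Lg k G V ρ).toLinearMap t f ∈ Fle k G V (d+1) := by
  induction t using TensorProduct.induction_on with
  | zero => simp
  | add x y hx hy => rw [map_add]; exact Submodule.add_mem _ hx hy
  | tmul v x => exact Lv_Fle k G V v d _ (Lg_Fle k G V ρ x d f hf)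

lemma lo_Fle (t) (d : ℕ) (f) (hf : f ∈ Fle k G V d) :
    lo k G V ρ R α β t f ∈ Fle k G V (d+1) := by
  refine Submodule.add_mem _ (eVG_Fle k G V ρ _ d f hf) ?_
  exact Fle_mono k G V (Nat.le_succ d) (Lg_Fle k G V ρ _ d f hf)

lemma q_Fle (n i : ℕ) (u) : q k G V ρ R α β (n+1) i u ∈ Fle k G V n := by
  induction n generalizing i with
  | zero =>
    cases i with
    | zero => simp [q]
    | succ i =>
      induction u using M_ind with
      | h0 => simp
      | ht v m => rw [q_succ, q]; simp
      | ha x y hx hy => rw [map_add]; exact Submodule.add_mem _ hx hy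
  | succ n ih =>
    cases i with
    | zero =>
      obtain ⟨t, rfl⟩ := (cons2 k G V n).surjective u
      induction t using TensorProduct.induction_on with
      | zero => simp
      | add x y hx hy => rw [map_add, map_add]; exact Submodule.add_mem _ hx hy
      | tmul t m =>
        rw [q_two]
        exact lo_Fle k G V ρ R α β t n _ (io_mem_Fle k G V le_rfl m)
    | succ i =>
      induction u using M_ind with
      | h0 => simp
      | ht v m => rw [q_succ]; exact Lv_Fle k G V v n _ (ih i m)
      | ha x y hx hy => rw [map_add]; exact Submodule.add_mem _ hx hy

lemma J_zero : J k G V ρ R α β 0 = ⊥ := by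
  rw [J, Submodule.span_eq_bot]
  rintro f ⟨n, hn, i, u, hu, rfl⟩
  rw [WM_bot k G V R n i (by omega), Submodule.mem_bot] at hu
  simp [hu]

lemma J_one : J k G V ρ R α β 1 = ⊥ := by
  rw [J, Submodule.span_eq_bot]
  rintro f ⟨n, hn, i, u, hu, rfl⟩
  rw [WM_bot k G V R n i (by omega), Submodule.mem_bot] at hu
  simp [hu]

lemma J_le_Fle (d : ℕ) : J k G V ρ R α β d ≤ Fle k G V d := by
  rw [J, Submodule.span_le]
  rintro f ⟨n, hn, i, u, hu, rfl⟩
  refine Submodule.sub_mem _ (io_mem_Fle k G V hn u) ?_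
  cases n with
  | zero => simp [q]
  | succ n => exact Fle_mono k G V (by omega) (q_Fle k G V ρ R α β n i u)

/-- `r · f - α(r) f - β(r) f ∈ J` -/
lemma quad_J (r : R) (d : ℕ) (f) (hf : f ∈ Fle k G V d) :
    eVV (Lv k G V) (r : V ⊗[k] V) f - lo k G V ρ R α β r f ∈ J k G V ρ R α β (d+2) := by
  refine Fle_ind k G V (P := fun f => eVV (Lv k G V) (r : V ⊗[k] V) f - lo k G V ρ R α β r f
    ∈ J k G V ρ R α β (d+2)) ?_ ?_ ?_ f hf
  · simp
  · intro n m hn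
    have : eVV (Lv k G V) (r : V ⊗[k] V) (io k G V n m)
        = io k G V (n+2) (cons2 k G V n ((r : V ⊗[k] V) ⊗ₜ[k] m)) := by
      generalize (r : V ⊗[k] V) = t
      induction t using TensorProduct.induction_on with
      | zero => simp
      | add x y hx hy => simp [hx, hy, TensorProduct.add_tmul]
      | tmul v w => simp
    rw [this, ← q_two]
    exact J_mem k G V ρ R α β (by omega) _ (WM_two_mem k G V R n r m)
  · intro x y hx hy
    rw [map_add, map_add, add_sub_add_comm]
    exact Submodule.add_mem _ hx hy

lemma io_cons2 (t : V ⊗[k] V) (n m) : io k G V (n+2) (cons2 k G V n (t ⊗ₜ[k] m))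
      = eVV (Lv k G V) t (io k G V n m) := by
  induction t using TensorProduct.induction_on with
  | zero => simp
  | add x y hx hy => simp [hx, hy, TensorProduct.add_tmul]
  | tmul v w => simp

/-! ### invariance -/

variable (hR : ∀ (g : G), ∀ x ∈ R, TensorProduct.map (ρ g) (ρ g) x ∈ R)

def Inv : Prop :=
  (∀ (g : G) (r : R), α (rActR k G V R ρ hR g r) = conjVG k G V ρ g (α r)) ∧
  (∀ (g : G) (r : R), β (rActR k G V R ρ hR g r) = conjKG k G g (β r))

lemma conj_mul (g : G) (x : MonoidAlgebra k G) :
    conjKG k G g x * MonoidAlgebra.of k G g = MonoidAlgebra.of k G g * x := by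
  simp only [conjKG, LinearMap.comp_apply, LinearMap.mulLeft_apply, LinearMap.mulRight_apply]
  rw [mul_assoc, ← (MonoidAlgebra.of k G).map_mul, inv_mul_cancel, (MonoidAlgebra.of k G).map_one,
    mul_one]

lemma eVG_conj {E : Type} [Ring E] [Algebra k E] (v : V →ₗ[k] E) (γ : MonoidAlgebra k G →ₐ[k] E)
    (hact : ∀ (a : G) (w : V), γ (MonoidAlgebra.of k G a) * v w
      = v (ρ a w) * γ (MonoidAlgebra.of k G a)) (g : G) (t) :
    eVG v γ.toLinearMap (conjVG k G V ρ g t) * γ (MonoidAlgebra.of k G g)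
      = γ (MonoidAlgebra.of k G g) * eVG v γ.toLinearMap t := by
  induction t using TensorProduct.induction_on with
  | zero => simp
  | add x y hx hy => simp only [map_add, add_mul, mul_add, hx, hy]
  | tmul w x =>
    rw [conjVG, TensorProduct.map_tmul, eVG_tmul, eVG_tmul, ← mul_assoc, hact, mul_assoc, mul_assoc,
      AlgHom.toLinearMap_apply, AlgHom.toLinearMap_apply, ← map_mul, ← map_mul, conj_mul]

lemma gF_lo (hinv : Inv k G V ρ R α β hR) (g : G) (r : R) (f) :
    gF k G V ρ g (lo k G V ρ R α β r f)
      = lo k G V ρ R α β (rActR k G V R ρ hR g r) (gF k G V ρ g f) := by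
  have h1 := eVG_conj k G V ρ (Lv k G V) (Lg k G V ρ) (Lg_Lv k G V ρ) g (α r)
  have h2 : Lg k G V ρ (conjKG k G g (β r)) * Lg k G V ρ (MonoidAlgebra.of k G g)
     = Lg k G V ρ (MonoidAlgebra.of k G g) * Lg k G V ρ (β r) := by
    rw [← map_mul, conj_mul, map_mul]
  have := congrArg₂ (· + ·) h1 h2
  simp only [← add_mul, ← mul_add, ← hinv.1, ← hinv.2, ← lo_coe] at this
  rw [Lg_of] at this
  exact (LinearMap.congr_fun this f).symm

lemma gM_cons2 (n : ℕ) (g : G) (t m) : gM k G V ρ (n+2) g (cons2 k G V n (t ⊗ₜ[k] m))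
    = cons2 k G V n (TensorProduct.map (ρ g) (ρ g) t ⊗ₜ[k] gM k G V ρ n g m) := by
  induction t using TensorProduct.induction_on with
  | zero => simp
  | add x y hx hy => simp [hx, hy, TensorProduct.add_tmul]
  | tmul v w => simp

lemma gM_WM (hinv : Inv k G V ρ R α β hR) (g : G) (n i : ℕ) (u) (hu : u ∈ WM k G V R n i) :
    gM k G V ρ n g u ∈ WM k G V R n i ∧
      gF k G V ρ g (q k G V ρ R α β n i u) = q k G V ρ R α β n i (gM k G V ρ n g u) := by
  induction n generalizing i with
  | zero =>
    rw [WM_bot k G V R 0 i (by omega), Submodule.mem_bot] at hu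
    simp [hu]
  | succ n ih =>
    cases i with
    | zero =>
      cases n with
      | zero =>
        rw [WM_bot k G V R _ _ (by omega), Submodule.mem_bot] at hu
        simp [hu]
      | succ n =>
        refine WM_two_ind k G V R n (P := fun u => gM k G V ρ (n+2) g u ∈ WM k G V R (n+2) 0 ∧
          gF k G V ρ g (q k G V ρ R α β (n+2) 0 u)
            = q k G V ρ R α β (n+2) 0 (gM k G V ρ (n+2) g u)) ?_ ?_ ?_ u hu
        · simp
        · intro r m
          rw [gM_cons2]
          refine ⟨WM_two_mem k G V R n (rActR k G V R ρ hR g r) _, ?_⟩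
          rw [q_two, q_two, gF_lo k G V ρ R α β hR hinv, gF_io]
          rfl
        · rintro x y ⟨hx, hx'⟩ ⟨hy, hy'⟩
          simp only [map_add, hx', hy']
          exact ⟨Submodule.add_mem _ hx hy, trivial⟩
    | succ i =>
      refine WM_succ_ind k G V R n i (P := fun u => gM k G V ρ (n+1) g u ∈ WM k G V R (n+1) (i+1) ∧
          gF k G V ρ g (q k G V ρ R α β (n+1) (i+1) u)
            = q k G V ρ R α β (n+1) (i+1) (gM k G V ρ (n+1) g u)) ?_ ?_ ?_ u hu
      · simp
      · intro v m hm
        rw [gM_cons]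
        refine ⟨WM_succ_mem k G V R n i _ _ (ih i m hm).1, ?_⟩
        rw [q_succ, q_succ, ← (ih i m hm).2]
        have := LinearMap.congr_fun (Lg_Lv k G V ρ g v) (q k G V ρ R α β n i m)
        rw [Lg_of] at this
        exact this
      · rintro x y ⟨hx, hx'⟩ ⟨hy, hy'⟩
        simp only [map_add, hx', hy']
        exact ⟨Submodule.add_mem _ hx hy, trivial⟩

lemma Lg_J (hinv : Inv k G V ρ R α β hR) {d : ℕ} (x) (f) (hf : f ∈ J k G V ρ R α β d) :
    Lg k G V ρ x f ∈ J k G V ρ R α β d := by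
  induction x using kG_ind with
  | ho g =>
    rw [Lg_of]
    refine J_ind k G V ρ R α β (P := fun f => gF k G V ρ g f ∈ J k G V ρ R α β d) ?_ ?_ ?_ f hf
    · simp
    · intro n i u hn hu
      obtain ⟨h1, h2⟩ := gM_WM k G V ρ R α β hR hinv g n i u hu
      rw [map_sub, gF_io, h2]
      exact J_mem k G V ρ R α β hn _ h1
    · intro x y hx hy; rw [map_add]; exact Submodule.add_mem _ hx hy
  | ha x y hx hy => rw [map_add]; exact Submodule.add_mem _ hx hy
  | hs c x hx => rw [map_smul]; exact Submodule.smul_mem _ _ hx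

lemma eVG_J (hinv : Inv k G V ρ R α β hR) {d : ℕ} (t) (f) (hf : f ∈ J k G V ρ R α β d) :
    eVG (Lv k G V) (Lg k G V ρ).toLinearMap t f ∈ J k G V ρ R α β (d+1) := by
  induction t using TensorProduct.induction_on with
  | zero => simp
  | add x y hx hy => rw [map_add]; exact Submodule.add_mem _ hx hy
  | tmul v x => exact Lv_J k G V ρ R α β v _ (Lg_J k G V ρ R α β hR hinv x f hf)

lemma lo_J (hinv : Inv k G V ρ R α β hR) {d : ℕ} (t) (f) (hf : f ∈ J k G V ρ R α β d) :
    lo k G V ρ R α β t f ∈ J k G V ρ R α β (d+1) := by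
  refine Submodule.add_mem _ (eVG_J k G V ρ R α β hR hinv _ f hf) ?_
  exact J_mono k G V ρ R α β (Nat.le_succ d) (Lg_J k G V ρ R α β hR hinv _ f hf)

end core

end PBWaux


namespace PBWaux

section core2

set_option linter.unusedSectionVars false

variable (k G V : Type) [Field k] [Group G] [AddCommGroup V] [Module k V]
variable (ρ : Representation k G V) (R : Submodule k (V ⊗[k] V))
  (α : R →ₗ[k] (V ⊗[k] MonoidAlgebra k G)) (β : R →ₗ[k] MonoidAlgebra k G)

/-- the obstruction conditions, in concrete form -/
def CondC : Prop := ∀ (x₁ : R ⊗[k] V) (x₂ : V ⊗[k] R), inclRV k V R x₁ = inclVR k V R x₂ →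
  ∃ y : R ⊗[k] MonoidAlgebra k G, inclRG k G V R y = Theta k G V R ρ α x₁ x₂ ∧
    αext k G V R α y = TensorProduct.map LinearMap.id β x₂
      - sigma k G V ρ (TensorProduct.map β LinearMap.id x₁) ∧
    βext k G V R β y = 0

section gen
variable {E : Type} [Ring E] [Algebra k E] (v : V →ₗ[k] E) (γ : MonoidAlgebra k G →ₐ[k] E)

lemma eVVG_inclRG (r : R) (x) : eVVG v γ.toLinearMap (inclRG k G V R (r ⊗ₜ[k] x))
    = eVV v (r : V ⊗[k] V) * γ x := by
  simp only [inclRG, LinearMap.comp_apply, TensorProduct.map_tmul, LinearMap.id_apply,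
    Submodule.subtype_apply, LinearEquiv.coe_coe]
  generalize (r : V ⊗[k] V) = t
  induction t using TensorProduct.induction_on with
  | zero => simp
  | add x y hx hy => simp only [TensorProduct.add_tmul, map_add, add_mul, hx, hy]
  | tmul a b => simp [mul_assoc]

lemma eVG_αext (r : R) (x) : eVG v γ.toLinearMap (αext k G V R α (r ⊗ₜ[k] x))
    = eVG v γ.toLinearMap (α r) * γ x := by
  simp only [αext, LinearMap.comp_apply, TensorProduct.map_tmul, LinearMap.id_apply,
    LinearEquiv.coe_coe]
  generalize α r = t
  induction t using TensorProduct.induction_on with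
  | zero => simp
  | add x y hx hy => simp only [TensorProduct.add_tmul, map_add, add_mul, hx, hy]
  | tmul a b => simp [mul_assoc]

lemma γ_βext (r : R) (x) : γ (βext k G V R β (r ⊗ₜ[k] x)) = γ (β r) * γ x := by
  simp [βext]

end gen

lemma quad_y (y : R ⊗[k] MonoidAlgebra k G) (d : ℕ) (f) (hf : f ∈ Fle k G V d) :
    (eVVG (Lv k G V) (Lg k G V ρ).toLinearMap (inclRG k G V R y)
      - eVG (Lv k G V) (Lg k G V ρ).toLinearMap (αext k G V R α y)
      - Lg k G V ρ (βext k G V R β y)) f ∈ J k G V ρ R α β (d+2) := by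
  induction y using TensorProduct.induction_on with
  | zero => simp
  | add x y hx hy =>
    have := Submodule.add_mem _ hx hy
    convert this using 1
    rw [← LinearMap.add_apply]
    congr 1
    simp only [map_add]
    abel
  | tmul r x =>
    rw [eVVG_inclRG, eVG_αext, γ_βext, ← sub_mul, ← sub_mul, sub_sub, ← lo_coe]
    exact quad_J k G V ρ R α β r d _ (Lg_Fle k G V ρ x d f hf)

def cons3 (n : ℕ) : (V ⊗[k] (V ⊗[k] V)) ⊗[k] M k G V n ≃ₗ[k] M k G V (n+3) :=
  TensorProduct.assoc k V (V ⊗[k] V) (M k G V n) ≪≫ₗ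
    TensorProduct.congr (LinearEquiv.refl k V) (cons2 k G V n) ≪≫ₗ cons k G V (n+2)

lemma cons3_tmul (n : ℕ) (v : V) (t : V ⊗[k] V) (m) : cons3 k G V n ((v ⊗ₜ[k] t) ⊗ₜ[k] m)
    = cons k G V (n+2) (v ⊗ₜ[k] cons2 k G V n (t ⊗ₜ[k] m)) := by
  simp [cons3]

lemma cons3_assoc (n : ℕ) (v : V) (t : V ⊗[k] V) (m) :
    cons3 k G V n (TensorProduct.assoc k V V V (t ⊗ₜ[k] v) ⊗ₜ[k] m)
    = cons2 k G V (n+1) (t ⊗ₜ[k] cons k G V n (v ⊗ₜ[k] m)) := by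
  induction t using TensorProduct.induction_on with
  | zero => simp
  | add x y hx hy => simp only [TensorProduct.add_tmul, map_add, hx, hy]
  | tmul a b => simp [cons3_tmul]

lemma q0_cons3 (n : ℕ) (x₁ : R ⊗[k] V) (m) :
    q k G V ρ R α β (n+3) 0 (cons3 k G V n (inclRV k V R x₁ ⊗ₜ[k] m))
      = (eVGV (Lv k G V) (Lg k G V ρ).toLinearMap (TensorProduct.map α LinearMap.id x₁)
        + eGV (Lv k G V) (Lg k G V ρ).toLinearMap (TensorProduct.map β LinearMap.id x₁))
          (io k G V n m) := by
  induction x₁ using TensorProduct.induction_on with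
  | zero => simp
  | add x y hx hy =>
    simp only [map_add, TensorProduct.add_tmul, hx, hy, LinearMap.add_apply]
    abel
  | tmul r v =>
    rw [inclRV, LinearMap.comp_apply, TensorProduct.map_tmul, LinearEquiv.coe_coe, cons3_assoc,
      q_two, Submodule.subtype_apply, lo_coe]
    simp

lemma q1_cons3 (n : ℕ) (x₂ : V ⊗[k] R) (m) :
    q k G V ρ R α β (n+3) 1 (cons3 k G V n (inclVR k V R x₂ ⊗ₜ[k] m))
      = (eVVG (Lv k G V) (Lg k G V ρ).toLinearMap (TensorProduct.map LinearMap.id α x₂)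
        + eVG (Lv k G V) (Lg k G V ρ).toLinearMap (TensorProduct.map LinearMap.id β x₂))
          (io k G V n m) := by
  induction x₂ using TensorProduct.induction_on with
  | zero => simp
  | add x y hx hy =>
    simp only [map_add, TensorProduct.add_tmul, hx, hy, LinearMap.add_apply]
    abel
  | tmul v r =>
    rw [inclVR, TensorProduct.map_tmul, cons3_tmul,
      q_succ, Submodule.subtype_apply, q_two, lo_coe]
    simp

lemma WM0_cons3 (n : ℕ) (u) (hu : u ∈ WM k G V R (n+3) 0) :
    (cons3 k G V n).symm u ∈ LinearMap.range (TensorProduct.map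
      (LinearMap.range (inclRV k V R)).subtype (LinearMap.id (R := k) (M := M k G V n))) := by
  refine WM_two_ind k G V R (n+1) (P := fun u => (cons3 k G V n).symm u ∈ LinearMap.range
    (TensorProduct.map (LinearMap.range (inclRV k V R)).subtype
      (LinearMap.id (R := k) (M := M k G V n)))) ?_ ?_ ?_ u hu
  · simp
  · intro r m
    induction m using M_ind with
    | h0 => simp
    | ht v m =>
      rw [← cons3_assoc, LinearEquiv.symm_apply_apply]
      exact ⟨⟨inclRV k V R (r ⊗ₜ[k] v), ⟨_, rfl⟩⟩ ⊗ₜ[k] m, rfl⟩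
    | ha x y hx hy =>
      rw [TensorProduct.tmul_add, map_add, map_add]; exact Submodule.add_mem _ hx hy
  · intro x y hx hy; rw [map_add]; exact Submodule.add_mem _ hx hy

lemma WM1_cons3 (n : ℕ) (u) (hu : u ∈ WM k G V R (n+3) 1) :
    (cons3 k G V n).symm u ∈ LinearMap.range (TensorProduct.map
      (LinearMap.range (inclVR k V R)).subtype (LinearMap.id (R := k) (M := M k G V n))) := by
  refine WM_succ_ind k G V R (n+2) 0 (P := fun u => (cons3 k G V n).symm u ∈ LinearMap.range
    (TensorProduct.map (LinearMap.range (inclVR k V R)).subtype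
      (LinearMap.id (R := k) (M := M k G V n)))) ?_ ?_ ?_ u hu
  · simp
  · intro v w hw
    refine WM_two_ind k G V R n (P := fun w => (cons3 k G V n).symm (cons k G V (n+2) (v ⊗ₜ[k] w))
      ∈ LinearMap.range (TensorProduct.map (LinearMap.range (inclVR k V R)).subtype
      (LinearMap.id (R := k) (M := M k G V n)))) ?_ ?_ ?_ w hw
    · simp
    · intro r m
      rw [← cons3_tmul, LinearEquiv.symm_apply_apply]
      exact ⟨⟨inclVR k V R (v ⊗ₜ[k] r), ⟨_, rfl⟩⟩ ⊗ₜ[k] m, rfl⟩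
    · intro x y hx hy
      rw [TensorProduct.tmul_add, map_add, map_add]; exact Submodule.add_mem _ hx hy
  · intro x y hx hy; rw [map_add]; exact Submodule.add_mem _ hx hy

lemma pair01 (hC : CondC k G V ρ R α β) (n : ℕ) (u) (h0 : u ∈ WM k G V R (n+3) 0)
    (h1 : u ∈ WM k G V R (n+3) 1) :
    q k G V ρ R α β (n+3) 0 u - q k G V ρ R α β (n+3) 1 u ∈ J k G V ρ R α β (n+2) := by
  have := inf_right _ _ _ (WM0_cons3 k G V R n u h0) (WM1_cons3 k G V R n u h1)
  obtain ⟨t, ht⟩ := this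
  obtain rfl : u = cons3 k G V n (TensorProduct.map (LinearMap.range (inclRV k V R) ⊓
    LinearMap.range (inclVR k V R)).subtype LinearMap.id t) := by
    rw [ht, LinearEquiv.apply_symm_apply]
  clear h0 h1 ht
  induction t using TensorProduct.induction_on with
  | zero => simp
  | add x y hx hy =>
    simp only [map_add, add_sub_add_comm]
    exact Submodule.add_mem _ hx hy
  | tmul x m =>
    obtain ⟨x, ⟨x₁, hx₁⟩, ⟨x₂, hx₂⟩⟩ := x
    obtain ⟨y, hy1, hy2, hy3⟩ := hC x₁ x₂ (hx₁.trans hx₂.symm)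
    rw [TensorProduct.map_tmul, Submodule.subtype_apply, LinearMap.id_apply]
    have e0 := q0_cons3 k G V ρ R α β n x₁ m
    have e1 := q1_cons3 k G V ρ R α β n x₂ m
    rw [hx₁] at e0
    rw [hx₂] at e1
    change q k G V ρ R α β (n+3) 0 (cons3 k G V n (x ⊗ₜ[k] m))
      - q k G V ρ R α β (n+3) 1 (cons3 k G V n (x ⊗ₜ[k] m)) ∈ _
    rw [e0, e1, ← LinearMap.sub_apply]
    have key := quad_y k G V ρ R α β y n (io k G V n m) (io_mem_Fle k G V le_rfl m)
    rw [hy1, hy2, hy3, map_sub, eVVG_Theta _ _ ρ R α (Lg_Lv k G V ρ),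
      eVG_sigma _ _ ρ (Lg_Lv k G V ρ), map_zero, sub_zero] at key
    convert key using 2
    abel

variable (hR : ∀ (g : G), ∀ x ∈ R, TensorProduct.map (ρ g) (ρ g) x ∈ R)

lemma pairfar (hinv : Inv k G V ρ R α β hR) (n j : ℕ) (u) (h0 : u ∈ WM k G V R (n+2) 0)
    (h1 : u ∈ WM k G V R (n+2) (j+2)) :
    q k G V ρ R α β (n+2) 0 u - q k G V ρ R α β (n+2) (j+2) u ∈ J k G V ρ R α β (n+1) := by
  have h0' : (cons2 k G V n).symm u ∈ LinearMap.range (TensorProduct.map R.subtype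
      (LinearMap.id (R := k) (M := M k G V n))) := by
    rw [WM] at h0
    obtain ⟨w, hw, rfl⟩ := h0
    simpa using hw
  have h1' : (cons2 k G V n).symm u ∈ LinearMap.range (TensorProduct.map
      (LinearMap.id (R := k) (M := V ⊗[k] V)) (WM k G V R n j).subtype) := by
    refine WM_succ_ind k G V R (n+1) (j+1) (P := fun u => (cons2 k G V n).symm u ∈ LinearMap.range
      (TensorProduct.map (LinearMap.id (R := k) (M := V ⊗[k] V)) (WM k G V R n j).subtype))
      ?_ ?_ ?_ u h1
    · simp
    · intro v w hw
      refine WM_succ_ind k G V R n j (P := fun w => (cons2 k G V n).symm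
        (cons k G V (n+1) (v ⊗ₜ[k] w)) ∈ LinearMap.range
        (TensorProduct.map (LinearMap.id (R := k) (M := V ⊗[k] V)) (WM k G V R n j).subtype))
        ?_ ?_ ?_ w hw
      · simp
      · intro v' m hm
        rw [← cons2_tmul, LinearEquiv.symm_apply_apply]
        exact ⟨(v ⊗ₜ[k] v') ⊗ₜ[k] ⟨m, hm⟩, rfl⟩
      · intro x y hx hy
        rw [TensorProduct.tmul_add, map_add, map_add]; exact Submodule.add_mem _ hx hy
    · intro x y hx hy; rw [map_add]; exact Submodule.add_mem _ hx hy
  obtain ⟨t, ht⟩ := inf_both _ _ _ h0' h1'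
  obtain rfl : u = cons2 k G V n (TensorProduct.map R.subtype (WM k G V R n j).subtype t) := by
    rw [ht, LinearEquiv.apply_symm_apply]
  clear h0 h1 ht h0' h1'
  induction t using TensorProduct.induction_on with
  | zero => simp
  | add x y hx hy =>
    simp only [map_add, add_sub_add_comm]
    exact Submodule.add_mem _ hx hy
  | tmul r w =>
    obtain ⟨w, hw⟩ := w
    rw [TensorProduct.map_tmul, Submodule.subtype_apply, Submodule.subtype_apply, q_two]
    have hq : ∀ t : V ⊗[k] V, q k G V ρ R α β (n+2) (j+2) (cons2 k G V n (t ⊗ₜ[k] w))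
        = eVV (Lv k G V) t (q k G V ρ R α β n j w) := by
      intro t
      induction t using TensorProduct.induction_on with
      | zero => simp
      | add x y hx hy => simp only [TensorProduct.add_tmul, map_add, hx, hy, LinearMap.add_apply]
      | tmul a b => rw [cons2_tmul, q_succ, q_succ]; rfl
    rw [hq]
    have a1 := lo_J k G V ρ R α β hR hinv (r : V ⊗[k] V) _ (J_mem k G V ρ R α β le_rfl w hw)
    rw [map_sub] at a1
    cases n with
    | zero =>
      rw [WM_bot k G V R _ _ (by omega), Submodule.mem_bot] at hw
      simp [hw]
    | succ n =>
      have a2 := quad_J k G V ρ R α β r n _ (q_Fle k G V ρ R α β n j w)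
      have a3 := Submodule.sub_mem _ a1 a2
      convert a3 using 1
      abel

lemma pair_lt (hinv : Inv k G V ρ R α β hR) (hC : CondC k G V ρ R α β) (n i j : ℕ) (hij : i < j)
    (u) (h0 : u ∈ WM k G V R (n+1) i) (h1 : u ∈ WM k G V R (n+1) j) :
    q k G V ρ R α β (n+1) i u - q k G V ρ R α β (n+1) j u ∈ J k G V ρ R α β n := by
  induction n generalizing i j with
  | zero =>
    rw [WM_bot k G V R _ _ (by omega), Submodule.mem_bot] at h0
    simp [h0]
  | succ n ih =>
    obtain _ | j := j
    · omega
    obtain _ | i := i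
    · obtain _ | j := j
      · obtain _ | n := n
        · rw [WM_bot k G V R _ _ (by omega), Submodule.mem_bot] at h1
          simp [h1]
        · exact pair01 k G V ρ R α β hC n u h0 h1
      · exact pairfar k G V ρ R α β hR hinv n j u h0 h1
    · have h0' : (cons k G V (n+1)).symm u ∈ LinearMap.range (TensorProduct.map
        (LinearMap.id (R := k) (M := V)) (WM k G V R (n+1) i).subtype) := by
        rw [WM] at h0
        obtain ⟨w, hw, rfl⟩ := h0
        simpa using hw
      have h1' : (cons k G V (n+1)).symm u ∈ LinearMap.range (TensorProduct.map
        (LinearMap.id (R := k) (M := V)) (WM k G V R (n+1) j).subtype) := by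
        rw [WM] at h1
        obtain ⟨w, hw, rfl⟩ := h1
        simpa using hw
      obtain ⟨t, ht⟩ := inf_left _ _ _ h0' h1'
      obtain rfl : u = cons k G V (n+1) (TensorProduct.map LinearMap.id
          (WM k G V R (n+1) i ⊓ WM k G V R (n+1) j).subtype t) := by
        rw [ht, LinearEquiv.apply_symm_apply]
      clear h0 h1 ht h0' h1'
      induction t using TensorProduct.induction_on with
      | zero => simp
      | add x y hx hy =>
        simp only [map_add, add_sub_add_comm]
        exact Submodule.add_mem _ hx hy
      | tmul v w =>
        obtain ⟨w, hw0, hw1⟩ := w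
        rw [TensorProduct.map_tmul, q_succ, q_succ, ← map_sub]
        exact Lv_J k G V ρ R α β v _ (ih i j (by omega) w hw0 hw1)

/-- all pairs of relations in degree `n+1` are resolvable -/
def Pairs (n : ℕ) : Prop := ∀ i j u, u ∈ WM k G V R (n+1) i → u ∈ WM k G V R (n+1) j →
    q k G V ρ R α β (n+1) i u - q k G V ρ R α β (n+1) j u ∈ J k G V ρ R α β n

lemma pairs_all (hinv : Inv k G V ρ R α β hR) (hC : CondC k G V ρ R α β) (n : ℕ) :
    Pairs k G V ρ R α β n := by
  intro i j u h0 h1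
  rcases lt_trichotomy i j with h | rfl | h
  · exact pair_lt k G V ρ R α β hR hinv hC n i j h u h0 h1
  · simp
  · rw [← neg_sub]
    exact Submodule.neg_mem _ (pair_lt k G V ρ R α β hR hinv hC n j i h u h1 h0)

lemma pairs_low (n : ℕ) (hn : n ≤ 1) : Pairs k G V ρ R α β n := by
  intro i j u h0 h1
  by_cases h : i = 0 ∧ j = 0
  · obtain ⟨rfl, rfl⟩ := h; simp
  · have : u = 0 := by
      by_cases hi : i = 0
      · rwa [WM_bot k G V R _ _ (by omega), Submodule.mem_bot] at h1
      · rwa [WM_bot k G V R _ _ (by omega), Submodule.mem_bot] at h0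
    simp [this]

/-- adapted bases -/
def Adapted : Prop := ∀ n : ℕ, ∃ (ι : Type) (b : Module.Basis ι k (M k G V n)),
    ∀ i : ℕ, ∃ S : Set ι, WM k G V R n i = Submodule.span k (⇑b '' S)

lemma J_decomp (d : ℕ) (z) (hz : z ∈ J k G V ρ R α β (d+1)) :
    ∃ z' ∈ J k G V ρ R α β d, ∃ u : ℕ → M k G V (d+1), (∀ i, u i ∈ WM k G V R (d+1) i) ∧
      z = z' + ∑ i ∈ Finset.range (d+1), (io k G V (d+1) (u i) - q k G V ρ R α β (d+1) i (u i)) := by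
  classical
  refine J_ind k G V ρ R α β (P := fun z => ∃ z' ∈ J k G V ρ R α β d, ∃ u : ℕ → M k G V (d+1),
    (∀ i, u i ∈ WM k G V R (d+1) i) ∧ z = z' + ∑ i ∈ Finset.range (d+1), (io k G V (d+1) (u i)
      - q k G V ρ R α β (d+1) i (u i))) ?_ ?_ ?_ z hz
  · exact ⟨0, Submodule.zero_mem _, 0, fun i => Submodule.zero_mem _, by simp⟩
  · intro n i u hn hu
    by_cases h : n ≤ d
    · exact ⟨_, J_mem k G V ρ R α β h u hu, 0, fun i => Submodule.zero_mem _, by simp⟩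
    · obtain rfl : n = d + 1 := by omega
      by_cases hi : i < d + 1
      · refine ⟨0, Submodule.zero_mem _, Pi.single i u, ?_, ?_⟩
        · intro j
          by_cases hj : j = i
          · subst hj; simpa using hu
          · rw [Pi.single_eq_of_ne hj]; exact Submodule.zero_mem _
        · rw [zero_add, Finset.sum_eq_single i]
          · simp
          · intro j _ hj
            rw [Pi.single_eq_of_ne hj]; simp
          · intro h; simp at h; omega
      · rw [WM_bot k G V R _ _ (by omega), Submodule.mem_bot] at hu
        exact ⟨0, Submodule.zero_mem _, 0, fun i => Submodule.zero_mem _, by simp [hu]⟩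
  · rintro x y ⟨x', hx', ux, hux, ex⟩ ⟨y', hy', uy, huy, ey⟩
    refine ⟨x' + y', Submodule.add_mem _ hx' hy', ux + uy,
      fun i => Submodule.add_mem _ (hux i) (huy i), ?_⟩
    rw [ex, ey]
    simp only [Pi.add_apply, map_add, Finset.sum_sub_distrib, Finset.sum_add_distrib]
    abel

lemma co_q (d i : ℕ) (u) : co k G V (d+1) (q k G V ρ R α β (d+1) i u) = 0 :=
  (mem_Fle k G V d _).1 (q_Fle k G V ρ R α β d i u) _ (Nat.lt_succ_self d)

lemma step (hA : Adapted k G V R) (d : ℕ) (hP : Pairs k G V ρ R α β d) (z)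
    (hz : z ∈ J k G V ρ R α β (d+1)) (h0 : co k G V (d+1) z = 0) : z ∈ J k G V ρ R α β d := by
  obtain ⟨z', hz', u, hu, rfl⟩ := J_decomp k G V ρ R α β d z hz
  have hz0 : co k G V (d+1) z' = 0 :=
    (mem_Fle k G V d _).1 (J_le_Fle k G V ρ R α β d hz') _ (Nat.lt_succ_self d)
  have hs : ∑ i ∈ Finset.range (d+1), u i = 0 := by
    rw [map_add, hz0, zero_add, map_sum] at h0
    simpa [co_q] using h0
  refine Submodule.add_mem _ hz' ?_
  obtain ⟨ι, b, hb⟩ := hA (d+1)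
  have := syzygy b (WM k G V R (d+1)) hb (q k G V ρ R α β (d+1)) (J k G V ρ R α β d) hP
    (Finset.range (d+1)) u hu hs
  rw [Finset.sum_sub_distrib, ← map_sum, hs, map_zero, zero_sub]
  exact Submodule.neg_mem _ this

/-- the descent: `J_e ∩ F_d = J_d` -/
lemma J_inf (hA : Adapted k G V R) (hP : ∀ n, Pairs k G V ρ R α β n) (d e : ℕ) (z)
    (hz : z ∈ J k G V ρ R α β e) (h0 : z ∈ Fle k G V d) : z ∈ J k G V ρ R α β d := by
  induction e with
  | zero => exact J_mono k G V ρ R α β (Nat.zero_le d) hz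
  | succ e ih =>
    by_cases h : e + 1 ≤ d
    · exact J_mono k G V ρ R α β h hz
    · exact ih (step k G V ρ R α β hA e (hP e) z hz ((mem_Fle k G V d z).1 h0 _ (by omega)))

lemma J_top (d : ℕ) : (J k G V ρ R α β (d+1)).map (co k G V (d+1)) = ⨆ i, WM k G V R (d+1) i := by
  apply le_antisymm
  · rw [J, Submodule.map_span, Submodule.span_le]
    rintro _ ⟨_, ⟨n, hn, i, u, hu, rfl⟩, rfl⟩
    by_cases h : n = d + 1
    · subst h
      rw [map_sub, co_io, co_q, sub_zero]
      exact Submodule.mem_iSup_of_mem i hu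
    · have := J_le_Fle k G V ρ R α β d (J_mem k G V ρ R α β (by omega) u hu)
      rw [(mem_Fle k G V d _).1 this _ (Nat.lt_succ_self d)]
      exact Submodule.zero_mem _
  · refine iSup_le fun i u hu => ?_
    refine ⟨_, J_mem k G V ρ R α β le_rfl u hu, ?_⟩
    rw [map_sub, co_io, co_q, sub_zero]

lemma finrank_map_ker {k X Y : Type} [Field k] [AddCommGroup X] [Module k X] [AddCommGroup Y]
    [Module k Y] (f : X →ₗ[k] Y) (A : Submodule k X) [FiniteDimensional k A] :
    Module.finrank k (A.map f) + Module.finrank k (A ⊓ LinearMap.ker f : Submodule k X)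
      = Module.finrank k A := by
  rw [← LinearMap.finrank_range_add_finrank_ker (f.domRestrict A), LinearMap.range_domRestrict]
  congr 1
  have h : A ⊓ LinearMap.ker f = Submodule.map A.subtype (LinearMap.ker (f.domRestrict A)) := by
    ext x
    simp only [Submodule.mem_inf, LinearMap.mem_ker, Submodule.mem_map, Submodule.subtype_apply,
      LinearMap.domRestrict_apply, Subtype.exists]
    constructor
    · rintro ⟨h1, h2⟩
      exact ⟨x, h1, h2, rfl⟩
    · rintro ⟨a, h1, h2, rfl⟩
      exact ⟨h1, h2⟩
  rw [h, Submodule.finrank_map_subtype_eq]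

lemma finrank_J [Fintype G] [FiniteDimensional k V] (hA : Adapted k G V R) (d : ℕ)
    (hP : ∀ n < d, Pairs k G V ρ R α β n) (hP0 : ∀ n < d, Pairs k G V ρ R 0 0 n) :
    Module.finrank k (J k G V ρ R α β d) = Module.finrank k (J k G V ρ R 0 0 d) := by
  induction d with
  | zero => rw [J_zero, J_zero]
  | succ d ih =>
    have main : ∀ (α : R →ₗ[k] (V ⊗[k] MonoidAlgebra k G)) (β : R →ₗ[k] MonoidAlgebra k G),
        Pairs k G V ρ R α β d → Module.finrank k (J k G V ρ R α β (d+1))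
          = Module.finrank k (⨆ i, WM k G V R (d+1) i : Submodule k _)
            + Module.finrank k (J k G V ρ R α β d) := by
      intro α β hP
      have : FiniteDimensional k (J k G V ρ R α β (d+1)) :=
        Submodule.finiteDimensional_of_le (J_le_Fle k G V ρ R α β (d+1))
      rw [← finrank_map_ker (co k G V (d+1)), J_top]
      have : J k G V ρ R α β (d+1) ⊓ LinearMap.ker (co k G V (d+1)) = J k G V ρ R α β d := by
        apply le_antisymm
        · rintro z ⟨hz, h0⟩
          exact step k G V ρ R α β hA d hP z hz h0
        · intro z hz
          exact ⟨J_mono k G V ρ R α β (Nat.le_succ d) hz,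
            (mem_Fle k G V d _).1 (J_le_Fle k G V ρ R α β d hz) _ (Nat.lt_succ_self d)⟩
      rw [this]
    rw [main α β (hP d (Nat.lt_succ_self d)), main 0 0 (hP0 d (Nat.lt_succ_self d)),
      ih (fun n hn => hP n (by omega)) (fun n hn => hP0 n (by omega))]

lemma inv_zero : Inv k G V ρ R 0 0 hR := by
  constructor <;> intro g r <;> simp

lemma condC_zero : CondC k G V ρ R 0 0 := by
  intro x₁ x₂ _
  refine ⟨0, ?_, ?_, ?_⟩ <;> simp [Theta]

end core2

end PBWaux


namespace PBWaux

section adapted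

set_option linter.unusedSectionVars false

variable (k G V : Type) [Field k] [Group G] [AddCommGroup V] [Module k V]
variable (R : Submodule k (V ⊗[k] V))

def v0 : V ≃ₗ[k] Vpow k V 0 := LinearEquiv.refl k _
def vcons (m : ℕ) : V ⊗[k] Vpow k V m ≃ₗ[k] Vpow k V (m+1) := LinearEquiv.refl k (V ⊗[k] Vpow k V m)

/-- `V^{⊗(m+1)} ⊗ kG ≃ M (m+1)` -/
def TT : (m : ℕ) → Vpow k V m ⊗[k] MonoidAlgebra k G ≃ₗ[k] M k G V (m+1)
  | 0 => TensorProduct.congr (v0 k V).symm (e0 k G V) ≪≫ₗ cons k G V 0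
  | m+1 => TensorProduct.congr (vcons k V m).symm (LinearEquiv.refl k _) ≪≫ₗ
      TensorProduct.assoc k V (Vpow k V m) (MonoidAlgebra k G) ≪≫ₗ
      TensorProduct.congr (LinearEquiv.refl k V) (TT m) ≪≫ₗ cons k G V (m+1)

lemma TT_zero (v x) : TT k G V 0 (v0 k V v ⊗ₜ[k] x) = cons k G V 0 (v ⊗ₜ[k] e0 k G V x) := by
  simp [TT]

lemma TT_succ (m : ℕ) (v u x) : TT k G V (m+1) (vcons k V m (v ⊗ₜ[k] u) ⊗ₜ[k] x)
    = cons k G V (m+1) (v ⊗ₜ[k] TT k G V m (u ⊗ₜ[k] x)) := by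
  simp [TT]

lemma TT_one (t : V ⊗[k] V) (x) :
    TT k G V 1 (vcons k V 0 (TensorProduct.map LinearMap.id (v0 k V).toLinearMap t) ⊗ₜ[k] x)
      = cons2 k G V 0 (t ⊗ₜ[k] e0 k G V x) := by
  induction t using TensorProduct.induction_on with
  | zero => simp
  | add x y hx hy => simp only [TensorProduct.add_tmul, map_add, hx, hy]
  | tmul a b =>
    rw [TensorProduct.map_tmul, TT_succ]
    simp [TT_zero]

lemma TT_two (m : ℕ) (t : V ⊗[k] V) (u x) :
    TT k G V (m+2) (vcons k V (m+1) (TensorProduct.map LinearMap.id (vcons k V m).toLinearMap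
      (TensorProduct.assoc k V V (Vpow k V m) (t ⊗ₜ[k] u))) ⊗ₜ[k] x)
      = cons2 k G V (m+1) (t ⊗ₜ[k] TT k G V m (u ⊗ₜ[k] x)) := by
  induction t using TensorProduct.induction_on with
  | zero => simp
  | add x y hx hy => simp only [TensorProduct.add_tmul, map_add, hx, hy]
  | tmul a b =>
    rw [TensorProduct.assoc_tmul, TensorProduct.map_tmul, TT_succ]
    simp [TT_succ]

lemma mapid_v0 (t : V ⊗[k] V) :
    vcons k V 0 (TensorProduct.map LinearMap.id (v0 k V).toLinearMap t) = t := by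
  have : TensorProduct.map LinearMap.id (v0 k V).toLinearMap = (LinearMap.id : V ⊗[k] V →ₗ[k] V ⊗[k] V) :=
    TensorProduct.map_id
  exact LinearMap.congr_fun this t

lemma mapid_vcons (m : ℕ) (t : V ⊗[k] (V ⊗[k] Vpow k V m)) :
    vcons k V (m+1) (TensorProduct.map LinearMap.id (vcons k V m).toLinearMap t) = t := by
  have : TensorProduct.map LinearMap.id (vcons k V m).toLinearMap
      = (LinearMap.id : V ⊗[k] (V ⊗[k] Vpow k V m) →ₗ[k] V ⊗[k] (V ⊗[k] Vpow k V m)) :=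
    TensorProduct.map_id
  exact LinearMap.congr_fun this t

lemma W0 (i : ℕ) : Wsub k V R 0 i = ⊥ := rfl
lemma W10 : Wsub k V R 1 0 = R := rfl
lemma W1s (i : ℕ) : Wsub k V R 1 (i+1) = ⊥ := rfl
lemma Ws0 (m : ℕ) : Wsub k V R (m+2) 0 =
      Submodule.map (TensorProduct.assoc k V V (Vpow k V m)).toLinearMap
        (LinearMap.range (TensorProduct.map R.subtype (LinearMap.id (M := Vpow k V m)))) := rfl
lemma Wss (m i : ℕ) : Wsub k V R (m+2) (i+1) =
      LinearMap.range (TensorProduct.map (LinearMap.id (M := V)) (Wsub k V R (m+1) i).subtype) := rfl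

lemma W10_mem (u) (hu : u ∈ Wsub k V R 1 0) : ∃ r : R,
    u = vcons k V 0 (TensorProduct.map LinearMap.id (v0 k V).toLinearMap r) :=
  ⟨⟨u, hu⟩, (mapid_v0 k V u).symm⟩

lemma Ws0_mem (m : ℕ) (u) (hu : u ∈ Wsub k V R (m+2) 0) : ∃ t,
    u = vcons k V (m+1) (TensorProduct.map LinearMap.id (vcons k V m).toLinearMap
      (TensorProduct.assoc k V V (Vpow k V m) (TensorProduct.map R.subtype LinearMap.id t))) := by
  obtain ⟨_, ⟨t, rfl⟩, h⟩ := hu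
  exact ⟨t, h.symm.trans (mapid_vcons k V m _).symm⟩

lemma Wss_mem (m i : ℕ) (u) (hu : u ∈ Wsub k V R (m+2) (i+1)) : ∃ t,
    u = vcons k V (m+1) (TensorProduct.map LinearMap.id (Wsub k V R (m+1) i).subtype t) := by
  obtain ⟨t, h⟩ := hu
  exact ⟨t, h.symm⟩

lemma TT_mem (m : ℕ) : ∀ (i : ℕ) (u) (x), u ∈ Wsub k V R m i →
    TT k G V m (u ⊗ₜ[k] x) ∈ WM k G V R (m+1) i := by
  induction m with
  | zero =>
    intro i u x hu
    rw [W0, Submodule.mem_bot] at hu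
    rw [hu, TensorProduct.zero_tmul, map_zero]
    exact Submodule.zero_mem _
  | succ m ih =>
    intro i u x hu
    match m, i, ih, u, hu with
    | 0, 0, _, u, hu =>
      obtain ⟨r, rfl⟩ := W10_mem k V R u hu
      rw [TT_one]
      exact WM_two_mem k G V R 0 r _
    | 0, i+1, _, u, hu =>
      rw [W1s, Submodule.mem_bot] at hu
      rw [hu, TensorProduct.zero_tmul, map_zero]
      exact Submodule.zero_mem _
    | m+1, 0, _, u, hu =>
      obtain ⟨t, rfl⟩ := Ws0_mem k V R m u hu
      clear hu
      induction t using TensorProduct.induction_on with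
      | zero =>
        simp only [map_zero, TensorProduct.zero_tmul]; exact Submodule.zero_mem _
      | add a b ha hb =>
        simp only [map_add, TensorProduct.add_tmul]; exact Submodule.add_mem _ ha hb
      | tmul r w =>
        rw [TensorProduct.map_tmul, TT_two]
        exact WM_two_mem k G V R (m+1) r (TT k G V m (w ⊗ₜ[k] x))
    | m+1, i+1, ih, u, hu =>
      obtain ⟨t, rfl⟩ := Wss_mem k V R m i u hu
      clear hu
      induction t using TensorProduct.induction_on with
      | zero =>
        simp only [map_zero, TensorProduct.zero_tmul]; exact Submodule.zero_mem _
      | add a b ha hb =>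
        simp only [map_add, TensorProduct.add_tmul]; exact Submodule.add_mem _ ha hb
      | tmul v w =>
        rw [TensorProduct.map_tmul, TT_succ]
        exact WM_succ_mem k G V R (m+2) i v _ (ih i w x w.2)

lemma WM_le (m : ℕ) : ∀ (i : ℕ), WM k G V R (m+1) i ≤
    Submodule.span k {z | ∃ u ∈ Wsub k V R m i, ∃ x, TT k G V m (u ⊗ₜ[k] x) = z} := by
  induction m with
  | zero =>
    intro i
    rw [WM_bot k G V R 1 i (by omega)]
    exact bot_le
  | succ m ih =>
    intro i
    match m, i, ih with
    | 0, 0, _ =>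
      intro z hz
      refine WM_two_ind k G V R 0 (P := fun z => z ∈ Submodule.span k _) (Submodule.zero_mem _) ?_
        (fun x y hx hy => Submodule.add_mem _ hx hy) z hz
      intro r m
      obtain ⟨x, rfl⟩ := (e0 k G V).surjective m
      refine Submodule.subset_span ⟨(r : V ⊗[k] V), ?_, x, ?_⟩
      · rw [W10]; exact r.2
      · have := TT_one k G V r x
        rw [mapid_v0] at this
        exact this
    | 0, i+1, _ =>
      rw [WM_bot k G V R _ _ (by omega)]
      exact bot_le
    | m+1, 0, _ =>
      intro z hz
      refine WM_two_ind k G V R (m+1) (P := fun z => z ∈ Submodule.span k _) (Submodule.zero_mem _) ?_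
        (fun x y hx hy => Submodule.add_mem _ hx hy) z hz
      intro r s
      obtain ⟨s, rfl⟩ := (TT k G V m).surjective s
      induction s using TensorProduct.induction_on with
      | zero => rw [map_zero, TensorProduct.tmul_zero, map_zero]; exact Submodule.zero_mem _
      | add a b ha hb =>
        rw [map_add, TensorProduct.tmul_add, map_add]; exact Submodule.add_mem _ ha hb
      | tmul u x =>
        refine Submodule.subset_span ⟨TensorProduct.assoc k V V (Vpow k V m) ((r : V ⊗[k] V) ⊗ₜ[k] u), ?_, x, ?_⟩
        · rw [Ws0]; exact ⟨_, ⟨r ⊗ₜ[k] u, rfl⟩, rfl⟩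
        · have := TT_two k G V m r u x
          rw [mapid_vcons] at this
          exact this
    | m+1, i+1, ih =>
      intro z hz
      refine WM_succ_ind k G V R (m+2) i (P := fun z => z ∈ Submodule.span k _) (Submodule.zero_mem _) ?_
        (fun x y hx hy => Submodule.add_mem _ hx hy) z hz
      intro v s hs
      replace hs := ih i hs
      induction hs using Submodule.span_induction with
      | zero => rw [TensorProduct.tmul_zero, map_zero]; exact Submodule.zero_mem _
      | add a b _ _ ha hb => rw [TensorProduct.tmul_add, map_add]; exact Submodule.add_mem _ ha hb
      | smul c a _ ha => rw [TensorProduct.tmul_smul, map_smul]; exact Submodule.smul_mem _ _ ha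
      | mem s hs =>
        obtain ⟨u, hu, x, rfl⟩ := hs
        refine Submodule.subset_span ⟨vcons k V (m+1) (v ⊗ₜ[k] u), ?_, x, TT_succ k G V (m+1) v u x⟩
        rw [Wss]
        exact ⟨v ⊗ₜ[k] ⟨u, hu⟩, rfl⟩

lemma adapted (hK : IsKoszul k V R) : Adapted k G V R := by
  intro n
  cases n with
  | zero =>
    refine ⟨_, Module.Basis.ofVectorSpace k _, fun i => ⟨∅, ?_⟩⟩
    rw [WM_bot k G V R 0 i (by omega)]
    simp
  | succ m =>
    obtain ⟨ι, b, hb⟩ := hK m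
    let c := Module.Basis.ofVectorSpace k (MonoidAlgebra k G)
    refine ⟨_, (b.tensorProduct c).map (TT k G V m), fun i => ?_⟩
    obtain ⟨S, hS⟩ := hb i
    refine ⟨S ×ˢ Set.univ, le_antisymm ?_ ?_⟩
    · refine (WM_le k G V R m i).trans (Submodule.span_le.2 ?_)
      rintro _ ⟨u, hu, x, rfl⟩
      rw [hS] at hu
      change TT k G V m (u ⊗ₜ[k] x) ∈ Submodule.span k _
      induction hu using Submodule.span_induction with
      | zero => rw [TensorProduct.zero_tmul, map_zero]; exact Submodule.zero_mem _
      | add a b _ _ ha hb => rw [TensorProduct.add_tmul, map_add]; exact Submodule.add_mem _ ha hb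
      | smul c a _ ha => rw [← TensorProduct.smul_tmul', map_smul]; exact Submodule.smul_mem _ _ ha
      | mem s hs =>
        obtain ⟨j, hj, rfl⟩ := hs
        have hx := c.mem_span x
        induction hx using Submodule.span_induction with
        | zero => rw [TensorProduct.tmul_zero, map_zero]; exact Submodule.zero_mem _
        | mem s hs =>
          obtain ⟨l, rfl⟩ := hs
          exact Submodule.subset_span ⟨(j, l), ⟨hj, trivial⟩, by simp⟩
        | add a b _ _ ha hb => rw [TensorProduct.tmul_add, map_add]; exact Submodule.add_mem _ ha hb
        | smul c a _ ha => rw [TensorProduct.tmul_smul, map_smul]; exact Submodule.smul_mem _ _ ha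
    · rw [Submodule.span_le]
      rintro _ ⟨⟨j, l⟩, ⟨hj, -⟩, rfl⟩
      rw [Module.Basis.map_apply, Module.Basis.tensorProduct_apply]
      apply TT_mem
      rw [hS]
      exact Submodule.subset_span ⟨j, hj, rfl⟩

end adapted

end PBWaux


namespace PBWaux

section toH

set_option linter.unusedSectionVars false

variable (k G V : Type) [Field k] [Group G] [AddCommGroup V] [Module k V]
variable (ρ : Representation k G V) (R : Submodule k (V ⊗[k] V))
  (α : R →ₗ[k] (V ⊗[k] MonoidAlgebra k G)) (β : R →ₗ[k] MonoidAlgebra k G)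

def gH : MonoidAlgebra k G →ₐ[k] HAlg k G V R ρ 0 α β :=
  AlgHom.ofLinearMap ((toH k G V R ρ 0 α β).toLinearMap.comp (gIn k G V))
    (by
      have := RingQuot.mkAlgHom_rel k (GRel.unit (k := k) (G := G) (V := V) (ρ := ρ) (R := R)
        (lam := 0) (α := α) (β := β))
      exact this.trans (map_one (RingQuot.mkAlgHom k (GRel k G V R ρ 0 α β))))
    (fun x y => by
      have := RingQuot.mkAlgHom_rel k (GRel.gmul (k := k) (G := G) (V := V) (ρ := ρ) (R := R)
        (lam := 0) (α := α) (β := β) x y)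
      rw [map_mul] at this
      exact this.symm)

def vH : V →ₗ[k] HAlg k G V R ρ 0 α β := (toH k G V R ρ 0 α β).toLinearMap.comp (vIn k G V)

lemma gH_apply (x) : gH k G V ρ R α β x = toH k G V R ρ 0 α β (gIn k G V x) := rfl
lemma vH_apply (x) : vH k G V ρ R α β x = toH k G V R ρ 0 α β (vIn k G V x) := rfl

lemma H_act (g : G) (v : V) : gH k G V ρ R α β (MonoidAlgebra.of k G g) * vH k G V ρ R α β v
    = vH k G V ρ R α β (ρ g v) * gH k G V ρ R α β (MonoidAlgebra.of k G g) := by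
  have := RingQuot.mkAlgHom_rel k (GRel.act (k := k) (G := G) (V := V) (ρ := ρ) (R := R)
        (lam := 0) (α := α) (β := β) g v)
  rw [LinearMap.zero_apply, map_zero, add_zero, map_mul, map_mul] at this
  exact this

lemma toH_mulVV (t) : toH k G V R ρ 0 α β (mulVV k G V t) = eVV (vH k G V ρ R α β) t := by
  induction t using TensorProduct.induction_on with
  | zero => simp
  | add x y hx hy => simp only [map_add, hx, hy]
  | tmul a b =>
    rw [eVV_tmul, vH_apply, vH_apply, ← map_mul]; rfl

lemma toH_embVG (t) : toH k G V R ρ 0 α β (embVG k G V t)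
    = eVG (vH k G V ρ R α β) (gH k G V ρ R α β).toLinearMap t := by
  induction t using TensorProduct.induction_on with
  | zero => simp
  | add x y hx hy => simp only [map_add, hx, hy]
  | tmul a b =>
    rw [eVG_tmul, vH_apply, AlgHom.toLinearMap_apply, gH_apply, ← map_mul]; rfl

lemma H_quad (r : R) : eVV (vH k G V ρ R α β) (r : V ⊗[k] V)
    = eVG (vH k G V ρ R α β) (gH k G V ρ R α β).toLinearMap (α r) + gH k G V ρ R α β (β r) := by
  have := RingQuot.mkAlgHom_rel k (GRel.quad (k := k) (G := G) (V := V) (ρ := ρ) (R := R)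
        (lam := 0) (α := α) (β := β) r)
  rw [map_add] at this
  rw [← toH_mulVV, ← toH_embVG]
  exact this

def phi : (n : ℕ) → M k G V n →ₗ[k] HAlg k G V R ρ 0 α β
  | 0 => (gH k G V ρ R α β).toLinearMap ∘ₗ (e0 k G V).symm.toLinearMap
  | n+1 => LinearMap.mul' k _ ∘ₗ TensorProduct.map (vH k G V ρ R α β) (phi n) ∘ₗ
      (cons k G V n).symm.toLinearMap

/-- the canonical map from the free module to `H` -/
def Ph : F k G V →ₗ[k] HAlg k G V R ρ 0 α β := fr k G V (phi k G V ρ R α β)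

@[simp] lemma Ph_io0 (x) : Ph k G V ρ R α β (io k G V 0 (e0 k G V x)) = gH k G V ρ R α β x := by
  simp [Ph, phi]

@[simp] lemma Ph_Lv (v f) : Ph k G V ρ R α β (Lv k G V v f) = vH k G V ρ R α β v * Ph k G V ρ R α β f := by
  have : Ph k G V ρ R α β ∘ₗ Lv k G V v
      = LinearMap.mulLeft k (vH k G V ρ R α β v) ∘ₗ Ph k G V ρ R α β := by
    apply F_ext
    intro n m
    rw [LinearMap.comp_apply, LinearMap.comp_apply, Lv_io, LinearMap.mulLeft_apply]
    simp [Ph, phi]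
  exact LinearMap.congr_fun this f

lemma Ph_cons (n v m) : Ph k G V ρ R α β (io k G V (n+1) (cons k G V n (v ⊗ₜ[k] m)))
    = vH k G V ρ R α β v * Ph k G V ρ R α β (io k G V n m) := by
  rw [← Lv_io, Ph_Lv]

@[simp] lemma Ph_Lg (x f) : Ph k G V ρ R α β (Lg k G V ρ x f)
    = gH k G V ρ R α β x * Ph k G V ρ R α β f := by
  induction x using kG_ind with
  | ha x y hx hy => rw [map_add, map_add, LinearMap.add_apply, map_add, add_mul, hx, hy]
  | hs c x hx => rw [map_smul, map_smul, LinearMap.smul_apply, map_smul, hx, smul_mul_assoc]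
  | ho g =>
    have : Ph k G V ρ R α β ∘ₗ Lg k G V ρ (MonoidAlgebra.of k G g)
        = LinearMap.mulLeft k (gH k G V ρ R α β (MonoidAlgebra.of k G g)) ∘ₗ Ph k G V ρ R α β := by
      apply F_ext
      intro n m
      rw [LinearMap.comp_apply, LinearMap.comp_apply, LinearMap.mulLeft_apply]
      induction n with
      | zero =>
        obtain ⟨x, rfl⟩ := (e0 k G V).surjective m
        rw [Lg_io0, Ph_io0, Ph_io0, map_mul]
      | succ n ih =>
        induction m using M_ind with
        | h0 => simp
        | ha x y hx hy => simp only [map_add, mul_add, hx, hy]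
        | ht v m =>
          rw [← Lv_io, ← Module.End.mul_apply, Lg_Lv, Module.End.mul_apply, Ph_Lv, ih, Ph_Lv,
            ← mul_assoc, ← mul_assoc, H_act]
    exact LinearMap.congr_fun this f

lemma Ph_eVG (t f) : Ph k G V ρ R α β (eVG (Lv k G V) (Lg k G V ρ).toLinearMap t f)
    = eVG (vH k G V ρ R α β) (gH k G V ρ R α β).toLinearMap t * Ph k G V ρ R α β f := by
  induction t using TensorProduct.induction_on with
  | zero => simp
  | add x y hx hy => simp only [map_add, LinearMap.add_apply, add_mul, hx, hy]
  | tmul a b => simp [mul_assoc]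

lemma Ph_eVV (t f) : Ph k G V ρ R α β (eVV (Lv k G V) t f)
    = eVV (vH k G V ρ R α β) t * Ph k G V ρ R α β f := by
  induction t using TensorProduct.induction_on with
  | zero => simp
  | add x y hx hy => simp only [map_add, LinearMap.add_apply, add_mul, hx, hy]
  | tmul a b => simp [mul_assoc]

lemma Ph_eVVG (t f) : Ph k G V ρ R α β (eVVG (Lv k G V) (Lg k G V ρ).toLinearMap t f)
    = eVVG (vH k G V ρ R α β) (gH k G V ρ R α β).toLinearMap t * Ph k G V ρ R α β f := by
  induction t using TensorProduct.induction_on with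
  | zero => simp
  | add x y hx hy => simp only [map_add, LinearMap.add_apply, add_mul, hx, hy]
  | tmul a b => simp [mul_assoc, Ph_eVG]

lemma Ph_lo (r : R) (f) : Ph k G V ρ R α β (lo k G V ρ R α β r f)
    = eVV (vH k G V ρ R α β) (r : V ⊗[k] V) * Ph k G V ρ R α β f := by
  rw [lo_coe, LinearMap.add_apply, map_add, Ph_eVG, Ph_Lg, ← add_mul, H_quad]

lemma Ph_q (n : ℕ) : ∀ (i : ℕ) (u), u ∈ WM k G V R n i →
    Ph k G V ρ R α β (io k G V n u) = Ph k G V ρ R α β (q k G V ρ R α β n i u) := by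
  induction n with
  | zero =>
    intro i u hu
    rw [WM_bot k G V R 0 i (by omega), Submodule.mem_bot] at hu
    simp [hu]
  | succ n ih =>
    intro i u hu
    cases i with
    | succ i =>
      refine WM_succ_ind k G V R n i (P := fun u => Ph k G V ρ R α β (io k G V (n+1) u)
        = Ph k G V ρ R α β (q k G V ρ R α β (n+1) (i+1) u)) ?_ ?_ ?_ u hu
      · simp
      · intro v m hm
        rw [Ph_cons, q_succ, Ph_Lv, ih i m hm]
      · intro x y hx hy
        simp only [map_add, hx, hy]
    | zero =>
      cases n with
      | zero =>
        rw [WM_bot k G V R 1 0 (by omega), Submodule.mem_bot] at hu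
        simp [hu]
      | succ n =>
        refine WM_two_ind k G V R n (P := fun u => Ph k G V ρ R α β (io k G V (n+2) u)
          = Ph k G V ρ R α β (q k G V ρ R α β (n+2) 0 u)) ?_ ?_ ?_ u hu
        · simp
        · intro r m
          rw [io_cons2, q_two, Ph_eVV, Ph_lo]
        · intro x y hx hy
          simp only [map_add, hx, hy]

lemma Ph_J (d : ℕ) (f) (hf : f ∈ J k G V ρ R α β d) : Ph k G V ρ R α β f = 0 := by
  refine J_ind k G V ρ R α β (P := fun f => Ph k G V ρ R α β f = 0) ?_ ?_ ?_ f hf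
  · simp
  · intro n i u _ hu
    rw [map_sub, Ph_q k G V ρ R α β n i u hu, sub_self]
  · intro x y hx hy
    rw [map_add, hx, hy, add_zero]

/-! ### kernel -/

def JJ : Submodule k (F k G V) := ⨆ d, J k G V ρ R α β d

lemma mem_JJ (f) : f ∈ JJ k G V ρ R α β ↔ ∃ d, f ∈ J k G V ρ R α β d := by
  rw [JJ, Submodule.mem_iSup_of_directed]
  exact directed_of_isDirected_le (fun a b h => J_mono k G V ρ R α β h)

variable (hR : ∀ (g : G), ∀ x ∈ R, TensorProduct.map (ρ g) (ρ g) x ∈ R)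

/-- the generator map into endomorphisms of `F / JJ` -/
def gen (hinv : Inv k G V ρ R α β hR) :
    (MonoidAlgebra k G × V) →ₗ[k] Module.End k (F k G V ⧸ JJ k G V ρ R α β) where
  toFun p := (JJ k G V ρ R α β).mapQ (JJ k G V ρ R α β) (Lg k G V ρ p.1 + Lv k G V p.2) (by
    intro f hf
    obtain ⟨d, hd⟩ := (mem_JJ k G V ρ R α β f).1 hf
    refine (mem_JJ k G V ρ R α β _).2 ⟨d+1, ?_⟩
    exact Submodule.add_mem _ (J_mono k G V ρ R α β (Nat.le_succ d)
      (Lg_J k G V ρ R α β hR hinv p.1 f hd)) (Lv_J k G V ρ R α β p.2 f hd))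
  map_add' p q := by
    ext f
    simp only [Prod.fst_add, Prod.snd_add, LinearMap.comp_apply, Submodule.mkQ_apply,
      LinearMap.add_apply, Submodule.mapQ_apply, map_add, ← Submodule.Quotient.mk_add]
    congr 1
    abel
  map_smul' c p := by
    ext f
    simp [← Submodule.Quotient.mk_smul, ← Submodule.Quotient.mk_add]

lemma gen_mk (hinv : Inv k G V ρ R α β hR) (p f) :
    gen k G V ρ R α β hR hinv p (Submodule.Quotient.mk f)
      = Submodule.Quotient.mk (Lg k G V ρ p.1 f + Lv k G V p.2 f) := rfl

def repF (hinv : Inv k G V ρ R α β hR) :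
    FreeAlg k G V →ₐ[k] Module.End k (F k G V ⧸ JJ k G V ρ R α β) :=
  TensorAlgebra.lift k (gen k G V ρ R α β hR hinv)

lemma repF_g (hinv : Inv k G V ρ R α β hR) (x f) :
    repF k G V ρ R α β hR hinv (gIn k G V x) (Submodule.Quotient.mk f)
      = Submodule.Quotient.mk (Lg k G V ρ x f) := by
  rw [repF, gIn, LinearMap.comp_apply, TensorAlgebra.lift_ι_apply, gen_mk]
  simp

lemma repF_v (hinv : Inv k G V ρ R α β hR) (x f) :
    repF k G V ρ R α β hR hinv (vIn k G V x) (Submodule.Quotient.mk f)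
      = Submodule.Quotient.mk (Lv k G V x f) := by
  rw [repF, vIn, LinearMap.comp_apply, TensorAlgebra.lift_ι_apply, gen_mk]
  simp

lemma repF_VV (hinv : Inv k G V ρ R α β hR) (t f) :
    repF k G V ρ R α β hR hinv (mulVV k G V t) (Submodule.Quotient.mk f)
      = Submodule.Quotient.mk (eVV (Lv k G V) t f) := by
  induction t using TensorProduct.induction_on with
  | zero => simp
  | add x y hx hy => simp only [map_add, LinearMap.add_apply, hx, hy, Submodule.Quotient.mk_add]
  | tmul a b =>
    have : mulVV k G V (a ⊗ₜ[k] b) = vIn k G V a * vIn k G V b := rfl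
    rw [this, map_mul, Module.End.mul_apply, repF_v, repF_v]
    rfl

lemma repF_VG (hinv : Inv k G V ρ R α β hR) (t f) :
    repF k G V ρ R α β hR hinv (embVG k G V t) (Submodule.Quotient.mk f)
      = Submodule.Quotient.mk (eVG (Lv k G V) (Lg k G V ρ).toLinearMap t f) := by
  induction t using TensorProduct.induction_on with
  | zero => simp
  | add x y hx hy => simp only [map_add, LinearMap.add_apply, hx, hy, Submodule.Quotient.mk_add]
  | tmul a b =>
    have : embVG k G V (a ⊗ₜ[k] b) = vIn k G V a * gIn k G V b := rfl
    rw [this, map_mul, Module.End.mul_apply, repF_g, repF_v]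
    rfl

lemma repF_rel (hinv : Inv k G V ρ R α β hR) ⦃a b⦄ (h : GRel k G V R ρ 0 α β a b) :
    repF k G V ρ R α β hR hinv a = repF k G V ρ R α β hR hinv b := by
  refine LinearMap.ext fun x => ?_
  obtain ⟨f, rfl⟩ := Submodule.Quotient.mk_surjective _ x
  cases h with
  | unit => rw [repF_g, map_one, map_one]; rfl
  | gmul x y =>
    rw [map_mul, Module.End.mul_apply, repF_g, repF_g, repF_g, map_mul]; rfl
  | act g v =>
    rw [LinearMap.zero_apply, map_zero, add_zero, map_mul, map_mul, Module.End.mul_apply,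
      Module.End.mul_apply, repF_g, repF_v, repF_v, repF_g, ← Module.End.mul_apply, Lg_Lv]
    rfl
  | quad r =>
    rw [map_add, LinearMap.add_apply, repF_VV, repF_VG, repF_g, ← Submodule.Quotient.mk_add,
      ← LinearMap.add_apply, ← lo_coe, Submodule.Quotient.eq]
    obtain ⟨d, hd⟩ := exists_Fle k G V f
    exact (mem_JJ k G V ρ R α β _).2 ⟨_, quad_J k G V ρ R α β r d f hd⟩

def repH (hinv : Inv k G V ρ R α β hR) :
    HAlg k G V R ρ 0 α β →ₐ[k] Module.End k (F k G V ⧸ JJ k G V ρ R α β) :=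
  RingQuot.liftAlgHom k ⟨repF k G V ρ R α β hR hinv, repF_rel k G V ρ R α β hR hinv⟩

lemma repH_toH (hinv : Inv k G V ρ R α β hR) (x) :
    repH k G V ρ R α β hR hinv (toH k G V R ρ 0 α β x) = repF k G V ρ R α β hR hinv x :=
  RingQuot.liftAlgHom_mkAlgHom_apply _ _ _ _

lemma repH_Ph (hinv : Inv k G V ρ R α β hR) (f) :
    repH k G V ρ R α β hR hinv (Ph k G V ρ R α β f) (Submodule.Quotient.mk (io k G V 0 (e0 k G V 1)))
      = Submodule.Quotient.mk f := by
  have : (LinearMap.applyₗ (R := k) (Submodule.Quotient.mk (io k G V 0 (e0 k G V 1)) :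
        F k G V ⧸ JJ k G V ρ R α β)) ∘ₗ
      (repH k G V ρ R α β hR hinv).toLinearMap ∘ₗ Ph k G V ρ R α β
      = (JJ k G V ρ R α β).mkQ := by
    apply F_ext
    intro n m
    change repH k G V ρ R α β hR hinv (Ph k G V ρ R α β (io k G V n m))
      (Submodule.Quotient.mk (io k G V 0 (e0 k G V 1))) = Submodule.Quotient.mk (io k G V n m)
    induction n with
    | zero =>
      obtain ⟨x, rfl⟩ := (e0 k G V).surjective m
      rw [Ph_io0, gH_apply, repH_toH, repF_g, Lg_io0, mul_one]
    | succ n ih =>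
      induction m using M_ind with
      | h0 => simp
      | ha x y hx hy =>
        simp only [map_add, LinearMap.add_apply, hx, hy, Submodule.Quotient.mk_add]
      | ht v m =>
        rw [Ph_cons, map_mul, Module.End.mul_apply, ih, vH_apply, repH_toH, repF_v, Lv_io]
  exact LinearMap.congr_fun this f

lemma ker_Ph (hinv : Inv k G V ρ R α β hR) (f) (hf : Ph k G V ρ R α β f = 0) :
    ∃ d, f ∈ J k G V ρ R α β d := by
  have := repH_Ph k G V ρ R α β hR hinv f
  rw [hf, map_zero, LinearMap.zero_apply, eq_comm, Submodule.Quotient.mk_eq_zero] at this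
  exact (mem_JJ k G V ρ R α β f).1 this

lemma ker_Ph_Fle (hinv : Inv k G V ρ R α β hR) (hC : CondC k G V ρ R α β)
    (hA : Adapted k G V R) (d : ℕ) :
    Fle k G V d ⊓ LinearMap.ker (Ph k G V ρ R α β) = J k G V ρ R α β d := by
  apply le_antisymm
  · rintro f ⟨h1, h2⟩
    obtain ⟨e, he⟩ := ker_Ph k G V ρ R α β hR hinv f h2
    exact J_inf k G V ρ R α β hA (pairs_all k G V ρ R α β hR hinv hC) d e f he h1
  · intro f hf
    exact ⟨J_le_Fle k G V ρ R α β d hf, Ph_J k G V ρ R α β d f hf⟩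

/-! ### filtration -/

lemma gr0_map : (grT k G V 0).map (toH k G V R ρ 0 α β).toLinearMap
    = LinearMap.range (gH k G V ρ R α β).toLinearMap := by
  have h1 : (grT k G V 0).map (toH k G V R ρ 0 α β).toLinearMap
      = Subalgebra.toSubmodule ((Algebra.adjoin k (Set.range (gIn k G V))).map
        (toH k G V R ρ 0 α β)) := by
    rw [grT]
    ext x
    rfl
  rw [h1, AlgHom.map_adjoin]
  have h2 : (toH k G V R ρ 0 α β) '' (Set.range (gIn k G V))
      = ((gH k G V ρ R α β).range : Set (HAlg k G V R ρ 0 α β)) := by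
    rw [← Set.range_comp]; rfl
  rw [h2, Algebra.adjoin_eq]
  ext x
  rfl

def XX (n : ℕ) : Submodule k (HAlg k G V R ρ 0 α β) :=
  LinearMap.range (Ph k G V ρ R α β ∘ₗ io k G V n)

lemma XX_zero : XX k G V ρ R α β 0 = LinearMap.range (gH k G V ρ R α β).toLinearMap := by
  ext x
  constructor
  · rintro ⟨m, rfl⟩
    obtain ⟨y, rfl⟩ := (e0 k G V).surjective m
    exact ⟨y, (Ph_io0 k G V ρ R α β y).symm⟩
  · rintro ⟨y, rfl⟩
    exact ⟨e0 k G V y, Ph_io0 k G V ρ R α β y⟩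

lemma XX_succ (n : ℕ) : XX k G V ρ R α β (n+1)
    = LinearMap.range (vH k G V ρ R α β) * XX k G V ρ R α β n := by
  apply le_antisymm
  · rintro _ ⟨m, rfl⟩
    rw [LinearMap.comp_apply]
    induction m using M_ind with
    | h0 => rw [map_zero, map_zero]; exact Submodule.zero_mem _
    | ha x y hx hy => rw [map_add, map_add]; exact Submodule.add_mem _ hx hy
    | ht v m =>
      rw [Ph_cons]
      exact Submodule.mul_mem_mul ⟨v, rfl⟩ ⟨m, rfl⟩
  · rw [Submodule.mul_le]
    rintro _ ⟨v, rfl⟩ _ ⟨m, rfl⟩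
    exact ⟨cons k G V n (v ⊗ₜ[k] m), Ph_cons k G V ρ R α β n v m⟩

lemma XX_pow (n : ℕ) : XX k G V ρ R α β n
    = LinearMap.range (vH k G V ρ R α β) ^ n * XX k G V ρ R α β 0 := by
  induction n with
  | zero => rw [pow_zero, one_mul]
  | succ n ih => rw [XX_succ, ih, pow_succ', mul_assoc]

lemma XX_left : XX k G V ρ R α β 0 * XX k G V ρ R α β 1 = XX k G V ρ R α β 1 := by
  apply le_antisymm
  · rw [XX_zero, Submodule.mul_le]
    rintro _ ⟨x, rfl⟩ _ ⟨m, rfl⟩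
    obtain ⟨m', h⟩ := Lg_io k G V ρ x 1 m
    refine ⟨m', ?_⟩
    rw [LinearMap.comp_apply, ← h, Ph_Lg]
    rfl
  · intro y hy
    rw [← one_mul y]
    refine Submodule.mul_mem_mul ?_ hy
    rw [XX_zero]
    exact ⟨1, map_one (gH k G V ρ R α β)⟩

lemma gr_map (n : ℕ) : (grT k G V n).map (toH k G V R ρ 0 α β).toLinearMap
    = XX k G V ρ R α β n := by
  induction n with
  | zero => rw [gr0_map, XX_zero]
  | succ n ih =>
    have hv : (LinearMap.range (vIn k G V)).map (toH k G V R ρ 0 α β).toLinearMap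
        = LinearMap.range (vH k G V ρ R α β) := (LinearMap.range_comp _ _).symm
    rw [grT, Submodule.map_mul, Submodule.map_mul, ih, hv, gr0_map, ← XX_zero, ← XX_succ,
      XX_pow k G V ρ R α β n, mul_assoc, XX_left, XX_succ, ← mul_assoc, ← pow_succ, ← XX_pow]

lemma filt_map (d : ℕ) : filtH k G V R ρ 0 α β d = (Fle k G V d).map (Ph k G V ρ R α β) := by
  have h : filtH k G V R ρ 0 α β d = ⨆ n : Fin (d+1), XX k G V ρ R α β n := by
    induction d with
    | zero =>
      rw [filtH, filtT, gr_map]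
      simp
    | succ d ih =>
      rw [filtH, filtT, Submodule.map_sup, gr_map, ← filtH, ih]
      apply le_antisymm
      · refine sup_le (iSup_le fun n => ?_) ?_
        · exact le_iSup (fun n : Fin (d+1+1) => XX k G V ρ R α β n) n.castSucc
        · exact le_iSup (fun n : Fin (d+1+1) => XX k G V ρ R α β n) (Fin.last (d+1))
      · refine iSup_le fun n => ?_
        refine Fin.lastCases ?_ (fun n => ?_) n
        · exact le_sup_right
        · exact le_sup_of_le_left (le_iSup (fun n : Fin (d+1) => XX k G V ρ R α β n) n)
  rw [h, Fle_eq, Submodule.map_iSup]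
  congr 1
  funext n
  rw [XX, LinearMap.range_comp]

lemma finrank_filt [Fintype G] [FiniteDimensional k V] (d : ℕ) :
    Module.finrank k (filtH k G V R ρ 0 α β d)
      + Module.finrank k (Fle k G V d ⊓ LinearMap.ker (Ph k G V ρ R α β) : Submodule k (F k G V))
      = Module.finrank k (Fle k G V d) := by
  rw [filt_map]
  exact finrank_map_ker _ _

lemma pbw_iff [Fintype G] [FiniteDimensional k V] : IsPBW k G V R ρ 0 α β ↔ ∀ d,
    Module.finrank k (Fle k G V d ⊓ LinearMap.ker (Ph k G V ρ R α β) : Submodule k (F k G V))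
      = Module.finrank k (Fle k G V d ⊓ LinearMap.ker (Ph k G V ρ R 0 0) : Submodule k (F k G V)) := by
  rw [IsPBW]
  refine forall_congr' fun d => ?_
  have h1 := finrank_filt k G V ρ R α β d
  have h2 := finrank_filt k G V ρ R 0 0 d
  omega

end toH

end PBWaux


namespace PBWaux

section final

set_option linter.unusedSectionVars false

variable (k G V : Type) [Field k] [Group G] [AddCommGroup V] [Module k V]
variable (ρ : Representation k G V) (R : Submodule k (V ⊗[k] V))
  (α : R →ₗ[k] (V ⊗[k] MonoidAlgebra k G)) (β : R →ₗ[k] MonoidAlgebra k G)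

def one : F k G V := io k G V 0 (e0 k G V 1)

lemma one_Fle : one k G V ∈ Fle k G V 0 := io_mem_Fle k G V le_rfl _

lemma Ph_one : Ph k G V ρ R α β (one k G V) = 1 := by
  rw [one, Ph_io0, map_one]

def m1 : V ⊗[k] MonoidAlgebra k G ≃ₗ[k] M k G V 1 :=
  TensorProduct.congr (LinearEquiv.refl k V) (e0 k G V) ≪≫ₗ cons k G V 0

def m2 : V ⊗[k] (V ⊗[k] MonoidAlgebra k G) ≃ₗ[k] M k G V 2 :=
  TensorProduct.congr (LinearEquiv.refl k V) (m1 k G V) ≪≫ₗ cons k G V 1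

lemma Lg_one (x) : Lg k G V ρ x (one k G V) = io k G V 0 (e0 k G V x) := by
  rw [one, Lg_io0, mul_one]

lemma eVG_one (t) : eVG (Lv k G V) (Lg k G V ρ).toLinearMap t (one k G V) = io k G V 1 (m1 k G V t) := by
  induction t using TensorProduct.induction_on with
  | zero => simp
  | add x y hx hy => simp only [map_add, LinearMap.add_apply, hx, hy]
  | tmul a b => simp [Lg_one, m1]

lemma eVVG_one (t) : eVVG (Lv k G V) (Lg k G V ρ).toLinearMap t (one k G V)
    = io k G V 2 (m2 k G V t) := by
  induction t using TensorProduct.induction_on with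
  | zero => simp
  | add x y hx hy => simp only [map_add, LinearMap.add_apply, hx, hy]
  | tmul a b => simp [eVG_one, m2]

/-- general element of degree at most two -/
def el (a : V ⊗[k] (V ⊗[k] MonoidAlgebra k G)) (b : V ⊗[k] MonoidAlgebra k G)
    (c : MonoidAlgebra k G) : F k G V :=
  io k G V 2 (m2 k G V a) + io k G V 1 (m1 k G V b) + io k G V 0 (e0 k G V c)

lemma el_inj {a b c a' b' c'} (h : el k G V a b c = el k G V a' b' c') : a = a' ∧ b = b' ∧ c = c' := by
  have h2 := congrArg (co k G V 2) h
  have h1 := congrArg (co k G V 1) h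
  have h0 := congrArg (co k G V 0) h
  simp only [el, map_add, co_io] at h0 h1 h2
  rw [co_io_ne k G V (by decide), co_io_ne k G V (by decide), co_io_ne k G V (by decide),
    co_io_ne k G V (by decide), add_zero, add_zero, add_zero, add_zero] at h2
  rw [co_io_ne k G V (by decide), co_io_ne k G V (by decide), co_io_ne k G V (by decide),
    co_io_ne k G V (by decide), add_zero, add_zero, zero_add, zero_add] at h1
  rw [co_io_ne k G V (by decide), co_io_ne k G V (by decide), co_io_ne k G V (by decide),
    co_io_ne k G V (by decide), add_zero, zero_add, zero_add] at h0
  exact ⟨(m2 k G V).injective h2, (m1 k G V).injective h1, (e0 k G V).injective h0⟩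

lemma el_Fle2 (a b c) : el k G V a b c ∈ Fle k G V 2 :=
  Submodule.add_mem _ (Submodule.add_mem _ (io_mem_Fle k G V (by omega) _)
    (io_mem_Fle k G V (by omega) _)) (io_mem_Fle k G V (by omega) _)

lemma el_Fle1 (b c) : el k G V 0 b c ∈ Fle k G V 1 := by
  rw [el, map_zero, map_zero, zero_add]
  exact Submodule.add_mem _ (io_mem_Fle k G V (by omega) _) (io_mem_Fle k G V (by omega) _)

lemma el_zero : el k G V 0 0 0 = 0 := by simp [el]

lemma el_add (a b c a' b' c') : el k G V a b c + el k G V a' b' c'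
    = el k G V (a + a') (b + b') (c + c') := by
  simp only [el, map_add]; abel

lemma Ph_el (a b c) : Ph k G V ρ R α β (el k G V a b c)
    = eVVG (vH k G V ρ R α β) (gH k G V ρ R α β).toLinearMap a
      + eVG (vH k G V ρ R α β) (gH k G V ρ R α β).toLinearMap b + gH k G V ρ R α β c := by
  rw [el, ← eVVG_one k G V ρ, ← eVG_one k G V ρ, ← Lg_one k G V ρ, map_add, map_add, Ph_eVVG,
    Ph_eVG, Ph_Lg, Ph_one, mul_one, mul_one, mul_one]

lemma J2_form (z) (hz : z ∈ J k G V ρ R α β 2) : ∃ y, z = el k G V (inclRG k G V R y)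
    (- αext k G V R α y) (- βext k G V R β y) := by
  have hadd : ∀ x y : F k G V, (∃ y, x = el k G V (inclRG k G V R y)
    (- αext k G V R α y) (- βext k G V R β y)) → (∃ t, y = el k G V (inclRG k G V R t)
    (- αext k G V R α t) (- βext k G V R β t)) → (∃ t, x + y = el k G V (inclRG k G V R t)
    (- αext k G V R α t) (- βext k G V R β t)) := by
    rintro x y ⟨s, rfl⟩ ⟨t, rfl⟩
    refine ⟨s + t, ?_⟩
    rw [el_add]
    simp only [map_add, neg_add]
  have hzero : ∃ y, (0 : F k G V) = el k G V (inclRG k G V R y)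
    (- αext k G V R α y) (- βext k G V R β y) := ⟨0, by simp [el]⟩
  refine J_ind k G V ρ R α β (P := fun z => ∃ y, z = el k G V (inclRG k G V R y)
    (- αext k G V R α y) (- βext k G V R β y)) hzero ?_ hadd z hz
  intro n i u hn hu
  by_cases h : n < i + 2
  · rw [WM_bot k G V R n i h, Submodule.mem_bot] at hu
    rw [hu, map_zero, map_zero, sub_zero]
    exact hzero
  · obtain rfl : n = 2 := by omega
    obtain rfl : i = 0 := by omega
    refine WM_two_ind k G V R 0 (P := fun u => ∃ y, io k G V 2 u - q k G V ρ R α β 2 0 u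
      = el k G V (inclRG k G V R y) (- αext k G V R α y) (- βext k G V R β y)) ?_ ?_ ?_ u hu
    · rw [map_zero, map_zero, sub_zero]
      exact hzero
    · intro r m
      obtain ⟨x, rfl⟩ := (e0 k G V).surjective m
      refine ⟨r ⊗ₜ[k] x, ?_⟩
      rw [el, map_neg, map_neg, map_neg, map_neg, ← eVVG_one k G V ρ, ← eVG_one k G V ρ,
        ← Lg_one k G V ρ, eVVG_inclRG, eVG_αext, γ_βext, io_cons2, q_two, lo_coe,
        ← Lg_one k G V ρ]
      simp only [Module.End.mul_apply, LinearMap.add_apply]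
      abel
    · intro x y hx hy
      have := hadd _ _ hx hy
      rw [map_add, map_add, add_sub_add_comm]
      exact this

lemma inclRG_inj : Function.Injective (inclRG k G V R) := by
  rw [inclRG, LinearMap.coe_comp]
  refine (TensorProduct.assoc k V V (MonoidAlgebra k G)).injective.comp ?_
  exact Module.Flat.rTensor_preserves_injective_linearMap (M := MonoidAlgebra k G) R.subtype
    R.injective_subtype

section gen
variable {E : Type} [Ring E] [Algebra k E] (v : V →ₗ[k] E) (γ : MonoidAlgebra k G →ₐ[k] E)

def eVVV : V ⊗[k] (V ⊗[k] V) →ₗ[k] E := (LinearMap.mul' k E).comp (TensorProduct.map v (eVV v))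

lemma eVVV_inclRV (hq : ∀ r : R, eVV v (r : V ⊗[k] V) = eVG v γ.toLinearMap (α r) + γ (β r))
    (x₁) : eVVV k V v (inclRV k V R x₁) = eVGV v γ.toLinearMap (TensorProduct.map α LinearMap.id x₁)
      + eGV v γ.toLinearMap (TensorProduct.map β LinearMap.id x₁) := by
  induction x₁ using TensorProduct.induction_on with
  | zero => simp
  | add x y hx hy => simp only [map_add, hx, hy]; abel
  | tmul r w =>
    have : eVVV k V v (inclRV k V R (r ⊗ₜ[k] w)) = eVV v (r : V ⊗[k] V) * v w := by
      simp only [inclRV, LinearMap.comp_apply, TensorProduct.map_tmul, LinearMap.id_apply,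
        Submodule.subtype_apply, LinearEquiv.coe_coe]
      generalize (r : V ⊗[k] V) = t
      induction t using TensorProduct.induction_on with
      | zero => simp
      | add x y hx hy => simp only [TensorProduct.add_tmul, map_add, add_mul, hx, hy]
      | tmul a b => simp [eVVV, mul_assoc]
    rw [this, hq, add_mul]
    rfl

lemma eVVV_inclVR (hq : ∀ r : R, eVV v (r : V ⊗[k] V) = eVG v γ.toLinearMap (α r) + γ (β r))
    (x₂) : eVVV k V v (inclVR k V R x₂) = eVVG v γ.toLinearMap (TensorProduct.map LinearMap.id α x₂)
      + eVG v γ.toLinearMap (TensorProduct.map LinearMap.id β x₂) := by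
  induction x₂ using TensorProduct.induction_on with
  | zero => simp
  | add x y hx hy => simp only [map_add, hx, hy]; abel
  | tmul w r =>
    have : eVVV k V v (inclVR k V R (w ⊗ₜ[k] r)) = v w * eVV v (r : V ⊗[k] V) := rfl
    rw [this, hq, mul_add]
    rfl

lemma eVV_act (hact : ∀ (a : G) (w : V), γ (MonoidAlgebra.of k G a) * v w
      = v (ρ a w) * γ (MonoidAlgebra.of k G a)) (g : G) (t) :
    eVV v (TensorProduct.map (ρ g) (ρ g) t) * γ (MonoidAlgebra.of k G g)
      = γ (MonoidAlgebra.of k G g) * eVV v t := by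
  induction t using TensorProduct.induction_on with
  | zero => simp
  | add x y hx hy => simp only [map_add, add_mul, mul_add, hx, hy]
  | tmul w x =>
    rw [TensorProduct.map_tmul, eVV_tmul, eVV_tmul, mul_assoc, ← hact, ← mul_assoc, ← hact,
      mul_assoc]

lemma γ_cancel (g : G) {a b : E} (h : a * γ (MonoidAlgebra.of k G g) = b * γ (MonoidAlgebra.of k G g)) :
    a = b := by
  have := congrArg (· * γ (MonoidAlgebra.of k G g⁻¹)) h
  simpa only [mul_assoc, ← map_mul, mul_inv_cancel, map_one, mul_one] using this

end gen

lemma A_inclRG (y) : eVVG (vH k G V ρ R 0 0) (gH k G V ρ R 0 0).toLinearMap (inclRG k G V R y) = 0 := by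
  induction y using TensorProduct.induction_on with
  | zero => simp
  | add x y hx hy => rw [map_add, map_add, hx, hy, add_zero]
  | tmul r x => rw [eVVG_inclRG, H_quad]; simp


lemma A_inj (hR : ∀ (g : G), ∀ x ∈ R, TensorProduct.map (ρ g) (ρ g) x ∈ R)
    (hA : Adapted k G V R) {b c}
    (h : Ph k G V ρ R 0 0 (el k G V 0 b c) = 0) : b = 0 ∧ c = 0 := by
  have h1 : el k G V 0 b c ∈ Fle k G V 1 ⊓ LinearMap.ker (Ph k G V ρ R 0 0) := ⟨el_Fle1 k G V b c, h⟩
  rw [ker_Ph_Fle k G V ρ R 0 0 hR (inv_zero k G V ρ R hR) (condC_zero k G V ρ R) hA, J_one,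
    Submodule.mem_bot, ← el_zero] at h1
  exact (el_inj k G V h1).2

/-- conditions (i)-(iii) give the concrete conditions -/
lemma condC_of (hR : ∀ (g : G), ∀ x ∈ R, TensorProduct.map (ρ g) (ρ g) x ∈ R)
    (hA : Adapted k G V R)
    (hi : ∀ x₁ x₂, inclRV k V R x₁ = inclVR k V R x₂ →
      embVGVA k G V R ρ ((TensorProduct.map α LinearMap.id) x₁)
            = embVVGA k G V R ρ ((TensorProduct.map LinearMap.id α) x₂))
    (hii : ∀ x₁ x₂, inclRV k V R x₁ = inclVR k V R x₂ → ∀ y,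
          inclRG k G V R y = Theta k G V R ρ α x₁ x₂ →
          embVGA k G V R ρ (αext k G V R α y)
            = embVGA k G V R ρ ((TensorProduct.map LinearMap.id β) x₂)
              - embGVA k G V R ρ ((TensorProduct.map β LinearMap.id) x₁))
    (hiii : ∀ x₁ x₂, inclRV k V R x₁ = inclVR k V R x₂ → ∀ y,
          inclRG k G V R y = Theta k G V R ρ α x₁ x₂ → gA k G V R ρ (βext k G V R β y) = 0) :
    CondC k G V ρ R α β := by
  intro x₁ x₂ h
  have hact : ∀ (a : G) (w : V), (gH k G V ρ R 0 0).toLinearMap (MonoidAlgebra.of k G a)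
      * vH k G V ρ R 0 0 w = vH k G V ρ R 0 0 (ρ a w) *
        (gH k G V ρ R 0 0).toLinearMap (MonoidAlgebra.of k G a) := H_act k G V ρ R 0 0
  have h1 : eVVG (vH k G V ρ R 0 0) (gH k G V ρ R 0 0).toLinearMap (Theta k G V R ρ α x₁ x₂) = 0 := by
    rw [eVVG_Theta _ _ ρ R α hact, sub_eq_zero]
    exact hi x₁ x₂ h
  have h2 : el k G V (Theta k G V R ρ α x₁ x₂) 0 0 ∈
      Fle k G V 2 ⊓ LinearMap.ker (Ph k G V ρ R 0 0) := by
    refine ⟨el_Fle2 k G V _ _ _, ?_⟩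
    refine LinearMap.mem_ker.2 ?_
    rw [Ph_el, h1, map_zero, map_zero, add_zero, add_zero]
  rw [ker_Ph_Fle k G V ρ R 0 0 hR (inv_zero k G V ρ R hR) (condC_zero k G V ρ R) hA] at h2
  obtain ⟨y, hy⟩ := J2_form k G V ρ R 0 0 _ h2
  have hy := (el_inj k G V hy).1.symm
  refine ⟨y, hy, ?_, ?_⟩
  · have e : eVG (vH k G V ρ R 0 0) (gH k G V ρ R 0 0).toLinearMap (αext k G V R α y)
        = eVG (vH k G V ρ R 0 0) (gH k G V ρ R 0 0).toLinearMap ((TensorProduct.map LinearMap.id β) x₂)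
          - eGV (vH k G V ρ R 0 0) (gH k G V ρ R 0 0).toLinearMap
            ((TensorProduct.map β LinearMap.id) x₁) := hii x₁ x₂ h y hy
    rw [← eVG_sigma _ _ ρ hact, ← map_sub, ← sub_eq_zero, ← map_sub] at e
    refine sub_eq_zero.1 (A_inj k G V ρ R hR hA (c := 0) ?_).1
    rw [Ph_el, e, map_zero, map_zero, add_zero, add_zero]
  · have e : gH k G V ρ R 0 0 (βext k G V R β y) = 0 := hiii x₁ x₂ h y hy
    refine (A_inj k G V ρ R hR hA (b := 0) ?_).2
    rw [Ph_el, e, map_zero, map_zero, add_zero, add_zero]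

lemma pbw_of [Fintype G] [FiniteDimensional k V]
    (hR : ∀ (g : G), ∀ x ∈ R, TensorProduct.map (ρ g) (ρ g) x ∈ R)
    (hA : Adapted k G V R)
    (hinv : Inv k G V ρ R α β hR) (hC : CondC k G V ρ R α β) : IsPBW k G V R ρ 0 α β := by
  rw [pbw_iff]
  intro d
  rw [ker_Ph_Fle k G V ρ R 0 0 hR (inv_zero k G V ρ R hR) (condC_zero k G V ρ R) hA,
    ker_Ph_Fle k G V ρ R α β hR hinv hC hA]
  exact finrank_J k G V ρ R α β hA d
    (fun n _ => pairs_all k G V ρ R α β hR hinv hC n)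
    (fun n _ => pairs_all k G V ρ R 0 0 hR (inv_zero k G V ρ R hR) (condC_zero k G V ρ R) n)

lemma ker2 [Fintype G] [FiniteDimensional k V]
    (hR : ∀ (g : G), ∀ x ∈ R, TensorProduct.map (ρ g) (ρ g) x ∈ R)
    (hA : Adapted k G V R)
    (h : IsPBW k G V R ρ 0 α β) :
    J k G V ρ R α β 2 = Fle k G V 2 ⊓ LinearMap.ker (Ph k G V ρ R α β) := by
  rw [pbw_iff] at h
  have h2 := h 2
  rw [ker_Ph_Fle k G V ρ R 0 0 hR (inv_zero k G V ρ R hR) (condC_zero k G V ρ R) hA,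
    ← finrank_J k G V ρ R α β hA 2 (fun n hn => pairs_low k G V ρ R α β n (by omega))
      (fun n hn => pairs_low k G V ρ R 0 0 n (by omega))] at h2
  have : FiniteDimensional k (Fle k G V 2 ⊓ LinearMap.ker (Ph k G V ρ R α β) : Submodule k (F k G V)) :=
    Submodule.finiteDimensional_of_le inf_le_left
  refine Submodule.eq_of_le_of_finrank_eq ?_ h2.symm
  intro f hf
  exact ⟨J_le_Fle k G V ρ R α β 2 hf, Ph_J k G V ρ R α β 2 f hf⟩

lemma H_inj [Fintype G] [FiniteDimensional k V]
    (hR : ∀ (g : G), ∀ x ∈ R, TensorProduct.map (ρ g) (ρ g) x ∈ R)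
    (hA : Adapted k G V R)
    (h : IsPBW k G V R ρ 0 α β) {b c} (h0 : Ph k G V ρ R α β (el k G V 0 b c) = 0) :
    b = 0 ∧ c = 0 := by
  have h1 : el k G V 0 b c ∈ J k G V ρ R α β 2 := by
    rw [ker2 k G V ρ R α β hR hA h]
    exact ⟨el_Fle2 k G V _ _ _, h0⟩
  have h3 := step k G V ρ R α β hA 1 (pairs_low k G V ρ R α β 1 le_rfl) _ h1
    ((mem_Fle k G V 1 _).1 (el_Fle1 k G V b c) 2 (by omega))
  rw [J_one, Submodule.mem_bot, ← el_zero] at h3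
  exact (el_inj k G V h3).2

lemma inv_of [Fintype G] [FiniteDimensional k V]
    (hR : ∀ (g : G), ∀ x ∈ R, TensorProduct.map (ρ g) (ρ g) x ∈ R)
    (hA : Adapted k G V R)
    (h : IsPBW k G V R ρ 0 α β) : Inv k G V ρ R α β hR := by
  have key : ∀ (g : G) (r : R), α (rActR k G V R ρ hR g r) - conjVG k G V ρ g (α r) = 0 ∧
      β (rActR k G V R ρ hR g r) - conjKG k G g (β r) = 0 := by
    intro g r
    apply H_inj k G V ρ R α β hR hA h
    rw [Ph_el, map_zero, zero_add, map_sub, map_sub]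
    have e : eVV (vH k G V ρ R α β) (rActR k G V R ρ hR g r : V ⊗[k] V)
        = eVG (vH k G V ρ R α β) (gH k G V ρ R α β).toLinearMap (conjVG k G V ρ g (α r))
          + gH k G V ρ R α β (conjKG k G g (β r)) := by
      apply γ_cancel k G (gH k G V ρ R α β) g
      rw [add_mul, eVG_conj k G V ρ _ _ (H_act k G V ρ R α β), ← map_mul, conj_mul, map_mul,
        ← mul_add, ← H_quad, ← eVV_act k G V ρ _ _ (H_act k G V ρ R α β)]
      rfl
    rw [H_quad] at e
    rw [sub_add_sub_comm, e, sub_self]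
  exact ⟨fun g r => sub_eq_zero.1 (key g r).1, fun g r => sub_eq_zero.1 (key g r).2⟩

lemma condC_of_pbw [Fintype G] [FiniteDimensional k V]
    (hR : ∀ (g : G), ∀ x ∈ R, TensorProduct.map (ρ g) (ρ g) x ∈ R)
    (hA : Adapted k G V R)
    (h : IsPBW k G V R ρ 0 α β) : CondC k G V ρ R α β := by
  intro x₁ x₂ hx
  have hact : ∀ (a : G) (w : V), (gH k G V ρ R α β).toLinearMap (MonoidAlgebra.of k G a)
      * vH k G V ρ R α β w = vH k G V ρ R α β (ρ a w) *
        (gH k G V ρ R α β).toLinearMap (MonoidAlgebra.of k G a) := H_act k G V ρ R α β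
  have e := congrArg (eVVV k V (vH k G V ρ R α β)) hx
  rw [eVVV_inclRV k G V R α β _ _ (H_quad k G V ρ R α β),
    eVVV_inclVR k G V R α β _ _ (H_quad k G V ρ R α β)] at e
  have hz : el k G V (Theta k G V R ρ α x₁ x₂)
      (sigma k G V ρ (TensorProduct.map β LinearMap.id x₁) - TensorProduct.map LinearMap.id β x₂) 0
      ∈ J k G V ρ R α β 2 := by
    rw [ker2 k G V ρ R α β hR hA h]
    refine ⟨el_Fle2 k G V _ _ _, ?_⟩
    refine LinearMap.mem_ker.2 ?_
    rw [Ph_el, eVVG_Theta _ _ ρ R α hact, map_sub, eVG_sigma _ _ ρ hact, map_zero,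
      add_zero, sub_add_sub_comm, e, sub_self]
  obtain ⟨y, hy⟩ := J2_form k G V ρ R α β _ hz
  obtain ⟨h1, h2, h3⟩ := el_inj k G V hy
  refine ⟨y, h1.symm, ?_, ?_⟩
  · rw [← neg_sub, h2, neg_neg]
  · exact neg_eq_zero.1 h3.symm

end final

end PBWaux




/-- **Theorem 2.3** of Shepler–Witherspoon, "Deforming group actions on Koszul
algebras" (= Theorem 5.4 of their "Poincaré–Birkhoff–Witt theorems" [quad], rephrased).
Let `G` be a finite group, `V` a finite dimensional `kG`-module and `S = T(V)/(R)` a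
Koszul algebra with `R ⊆ V ⊗ V` closed under the `G`-action.  A filtered quadratic
algebra `H` is a PBW deformation of `S ⋊ G` preserving the action of `G` iff
`H ≅ H_{0,α,β}` for `G`-invariant parameters `α : R → V ⊗ kG`, `β : R → kG`
satisfying (i)–(iii); stated per parameters:  `H_{0,α,β}` (i.e. `H_{λ,α,β}` with
`λ = 0`, which is what it means for the deformation to preserve the group action) is a
PBW deformation of `S ⋊ G` iff `α` and `β` are `G`-invariant and (i)–(iii) hold upon
projection to `S ⋊ G`.  Here `G` acts on parameters by `(ᵍα)(r) = ᵍ(α(ᵍ⁻¹ r))` with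
`ᵍ(v ⊗ h) = ᵍv ⊗ ghg⁻¹`, and an element `x ∈ (V ⊗ R) ∩ (R ⊗ V)` is encoded by its two
presentations `x₁ ∈ R ⊗ V`, `x₂ ∈ V ⊗ R`; condition (i) guarantees that the element
`((1 ⊗ σ)(α ⊗ 1) − 1 ⊗ α)(x)` of (ii) and (iii) lies in `R ⊗ kG`, encoded by the
(necessarily unique) `y` with `inclRG y = Theta x₁ x₂`. -/
theorem pbw_deformation_preserving_group_action
    (k G V : Type) [Field k] [Group G] [Fintype G] [AddCommGroup V] [Module k V]
    [FiniteDimensional k V] (h2 : (2 : k) ≠ 0)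
    (ρ : Representation k G V) (R : Submodule k (V ⊗[k] V))
    (hR : ∀ (g : G), ∀ x ∈ R, TensorProduct.map (ρ g) (ρ g) x ∈ R)
    (hKoszul : IsKoszul k V R)
    (α : R →ₗ[k] (V ⊗[k] MonoidAlgebra k G))
    (β : R →ₗ[k] MonoidAlgebra k G) :
    IsPBW k G V R ρ 0 α β ↔
      -- G-invariance of α :  ᵍα = α
      ((∀ (g : G) (r : R), α (rActR k G V R ρ hR g r) = conjVG k G V ρ g (α r)) ∧
      -- G-invariance of β :  ᵍβ = β
      (∀ (g : G) (r : R), β (rActR k G V R ρ hR g r) = conjKG k G g (β r)) ∧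
      -- (i)  α⊗1 − 1⊗α = 0  on (V⊗R) ∩ (R⊗V)
      (∀ (x₁ : (R : Submodule k (V ⊗[k] V)) ⊗[k] V) (x₂ : V ⊗[k] (R : Submodule k (V ⊗[k] V))),
        inclRV k V R x₁ = inclVR k V R x₂ →
          embVGVA k G V R ρ ((TensorProduct.map α LinearMap.id) x₁)
            = embVVGA k G V R ρ ((TensorProduct.map LinearMap.id α) x₂)) ∧
      -- (ii)  α((1⊗σ)(α⊗1) − 1⊗α) = 1⊗β − β⊗1  on (V⊗R) ∩ (R⊗V)
      (∀ (x₁ : (R : Submodule k (V ⊗[k] V)) ⊗[k] V) (x₂ : V ⊗[k] (R : Submodule k (V ⊗[k] V))),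
        inclRV k V R x₁ = inclVR k V R x₂ →
        ∀ y : (R : Submodule k (V ⊗[k] V)) ⊗[k] MonoidAlgebra k G,
          inclRG k G V R y = Theta k G V R ρ α x₁ x₂ →
          embVGA k G V R ρ (αext k G V R α y)
            = embVGA k G V R ρ ((TensorProduct.map LinearMap.id β) x₂)
              - embGVA k G V R ρ ((TensorProduct.map β LinearMap.id) x₁)) ∧
      -- (iii)  β((1⊗σ)(α⊗1) − 1⊗α) = 0  on (V⊗R) ∩ (R⊗V)
      (∀ (x₁ : (R : Submodule k (V ⊗[k] V)) ⊗[k] V) (x₂ : V ⊗[k] (R : Submodule k (V ⊗[k] V))),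
        inclRV k V R x₁ = inclVR k V R x₂ →
        ∀ y : (R : Submodule k (V ⊗[k] V)) ⊗[k] MonoidAlgebra k G,
          inclRG k G V R y = Theta k G V R ρ α x₁ x₂ →
          gA k G V R ρ (βext k G V R β y) = 0)) := by
  have hA := PBWaux.adapted k G V R hKoszul
  constructor
  · intro h
    obtain ⟨ha, hb⟩ := PBWaux.inv_of k G V ρ R α β hR hA h
    have hC := PBWaux.condC_of_pbw k G V ρ R α β hR hA h
    have hact : ∀ (a : G) (w : V), (PBWaux.gH k G V ρ R 0 0).toLinearMap (MonoidAlgebra.of k G a)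
        * PBWaux.vH k G V ρ R 0 0 w = PBWaux.vH k G V ρ R 0 0 (ρ a w) *
        (PBWaux.gH k G V ρ R 0 0).toLinearMap (MonoidAlgebra.of k G a) := PBWaux.H_act k G V ρ R 0 0
    refine ⟨ha, hb, ?_, ?_, ?_⟩
    · intro x₁ x₂ hx
      obtain ⟨y, h1, -, -⟩ := hC x₁ x₂ hx
      have e := PBWaux.A_inclRG k G V ρ R y
      rw [h1, PBWaux.eVVG_Theta _ _ ρ R α hact, sub_eq_zero] at e
      exact e
    · intro x₁ x₂ hx y hy
      obtain ⟨y', h1, h2, -⟩ := hC x₁ x₂ hx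
      obtain rfl := PBWaux.inclRG_inj k G V R (hy.trans h1.symm)
      rw [h2, map_sub]
      congr 1
      exact PBWaux.eVG_sigma _ _ ρ hact _
    · intro x₁ x₂ hx y hy
      obtain ⟨y', h1, -, h3⟩ := hC x₁ x₂ hx
      obtain rfl := PBWaux.inclRG_inj k G V R (hy.trans h1.symm)
      rw [h3, map_zero]
  · rintro ⟨ha, hb, hi, hii, hiii⟩
    exact PBWaux.pbw_of k G V ρ R α β hR hA ⟨ha, hb⟩
      (PBWaux.condC_of k G V ρ R α β hR hA hi hii hiii)
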